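/- Main theorem: a system of elements {g_1,...,g_k} (1 ≤ k ≤ n) of the free metabelian Lie ring M on n generators is primitive if and only if it is uniformly distributed on the variety of metabelian Lie rings, i.e. for every finite metabelian Lie ring R and every tuple p ∈ R^k, the number of n-tuples r ∈ R^n with (g_1(r),...,g_k(r)) = p is exactly |R|^{n−k}. -/

import Mathlib

/-- The free metabelian Lie ring `M` on `x₁,…,xₙ`: the quotient of the free Lie ring by
the second derived ideal. -/
abbrev M (n : ℕ) :=
  FreeLieAlgebra ℤ (Fin n) ⧸ LieAlgebra.derivedSeries ℤ (FreeLieAlgebra ℤ (Fin n)) 2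

/-- The natural projection `L → M`. -/
noncomputable def mkM (n : ℕ) : FreeLieAlgebra ℤ (Fin n) → M n := LieSubmodule.Quotient.mk

/-- `h` is a system of free generators of the free metabelian Lie ring `M`. -/
def IsFreeGenSet (n : ℕ) (h : Fin n → M n) : Prop :=
  ∀ (A : Type) [LieRing A] [LieAlgebra ℤ A],
    (∀ a b c d : A, ⁅⁅a, b⁆, ⁅c, d⁆⁆ = 0) →
      ∀ f : Fin n → A, ∃! φ : M n →ₗ⁅ℤ⁆ A, ∀ i, φ (h i) = f i

/-- A system of elements of `M` is primitive if it can be completed to a system of free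
generators of `M`. -/
def IsPrimitiveSystem (n k : ℕ) (hk : k ≤ n) (g : Fin k → M n) : Prop :=
  ∃ h : Fin n → M n, IsFreeGenSet n h ∧ ∀ j : Fin k, h (Fin.castLE hk j) = g j

/-- A system of Lie polynomials `g₁,…,g_k` is uniformly distributed on the variety of
metabelian Lie rings: for every finite metabelian Lie ring `R` and every tuple
`p ∈ R^k`, the number of `n`-tuples `r ∈ R^n` with `(g₁(r),…,g_k(r)) = p` is exactly
`|R|^{n−k}`.  (Evaluation of a Lie polynomial is by the universal property of the free
Lie ring; on a metabelian ring it only depends on the image in `M`.) -/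
def IsUniformlyDistributed (n k : ℕ) (g : Fin k → FreeLieAlgebra ℤ (Fin n)) : Prop :=
  ∀ (R : Type) [LieRing R] [LieAlgebra ℤ R] [Fintype R],
    (∀ a b c d : R, ⁅⁅a, b⁆, ⁅c, d⁆⁆ = 0) →
      ∀ pv : Fin k → R,
        Nat.card {r : Fin n → R // ∀ j, (FreeLieAlgebra.lift ℤ r) (g j) = pv j} =
          Fintype.card R ^ (n - k)

namespace FML
open Polynomial

section pid
variable {R : Type*} [CommRing R]

/-- Extend a linear automorphism of the tail. -/
noncomputable def consLift {m : ℕ} (e : (Fin m → R) ≃ₗ[R] (Fin m → R)) :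
    (Fin (m+1) → R) ≃ₗ[R] (Fin (m+1) → R) :=
  (Fin.consLinearEquiv R (fun _ : Fin (m+1) => R)).symm.trans
    (((LinearEquiv.refl R R).prodCongr e).trans (Fin.consLinearEquiv R (fun _ : Fin (m+1) => R)))

lemma consLift_apply {m : ℕ} (e : (Fin m → R) ≃ₗ[R] (Fin m → R)) (y : Fin (m+1) → R) :
    consLift e y = Fin.cons (y 0) (e (Fin.tail y)) := by
  rfl

/-- A two by two linear automorphism on the first two coordinates. -/
noncomputable def twoLift {m : ℕ} (a b c d : R) (h : a * d - b * c = 1) :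
    (Fin (m+2) → R) ≃ₗ[R] (Fin (m+2) → R) where
  toFun z := Fin.cons (a * z 0 + b * z 1) (Fin.cons (c * z 0 + d * z 1) (Fin.tail (Fin.tail z)))
  invFun z := Fin.cons (d * z 0 - b * z 1) (Fin.cons (- c * z 0 + a * z 1) (Fin.tail (Fin.tail z)))
  map_add' x y := by
    ext i
    refine Fin.cases ?_ (fun i => Fin.cases ?_ (fun i => ?_) i) i
    · simp; ring
    · simp; ring
    · simp [Fin.tail]
  map_smul' r x := by
    ext i
    refine Fin.cases ?_ (fun i => Fin.cases ?_ (fun i => ?_) i) i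
    · simp; ring
    · simp; ring
    · simp [Fin.tail]
  left_inv x := by
    ext i
    refine Fin.cases ?_ (fun i => Fin.cases ?_ (fun i => ?_) i) i
    · simp
      linear_combination (x 0) * h
    · simp
      linear_combination (x 1) * h
    · simp [Fin.tail]
  right_inv x := by
    ext i
    refine Fin.cases ?_ (fun i => Fin.cases ?_ (fun i => ?_) i) i
    · simp
      linear_combination (x 0) * h
    · simp
      linear_combination (x 1) * h
    · simp [Fin.tail]

lemma pid_vec [IsDomain R] [IsPrincipalIdealRing R] (m : ℕ) (y : Fin (m+1) → R) :
    ∃ e : (Fin (m+1) → R) ≃ₗ[R] (Fin (m+1) → R), ∃ α, e y = Pi.single 0 α := by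
  induction m with
  | zero =>
    refine ⟨LinearEquiv.refl _ _, y 0, ?_⟩
    ext i
    have : i = 0 := Fin.ext (by omega)
    subst this
    simp
  | succ m ih =>
    obtain ⟨e, α, he⟩ := ih (Fin.tail y)
    classical
    let _ : GCDMonoid R := IsBezout.toGCDDomain R
    obtain ⟨x', y', hx, hy, hu⟩ := extract_gcd (y 0) α
    rw [gcd_isUnit_iff] at hu
    obtain ⟨a, b, hab⟩ := hu
    generalize gcd (y 0) α = g at hx hy
    refine ⟨(consLift e).trans (twoLift a b (-y') x' (by linear_combination hab)), g, ?_⟩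
    rw [LinearEquiv.trans_apply, consLift_apply, he]
    ext i
    refine Fin.cases ?_ (fun i => Fin.cases ?_ (fun i => ?_) i) i
    · simp [twoLift]
      linear_combination a * hx + b * hy + g * hab
    · simp [twoLift]
      linear_combination (-y') * hx + x' * hy
    · simp [twoLift, Fin.tail]

lemma pid_tri [IsDomain R] [IsPrincipalIdealRing R] (m : ℕ) : ∀ (s : ℕ) (c : Fin s → Fin m → R),
    ∃ e : (Fin m → R) ≃ₗ[R] (Fin m → R), ∀ (j : Fin s) (i : Fin m), j.val < i.val → e (c j) i = 0 := by
  induction m with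
  | zero => exact fun s c => ⟨LinearEquiv.refl _ _, fun j i => i.elim0⟩
  | succ m ih =>
    intro s c
    cases s with
    | zero => exact ⟨LinearEquiv.refl _ _, fun j => j.elim0⟩
    | succ s =>
      obtain ⟨e1, α, h1⟩ := pid_vec m (c 0)
      obtain ⟨e2, h2⟩ := ih s (fun j => Fin.tail (e1 (c j.succ)))
      refine ⟨e1.trans (consLift e2), fun j i => ?_⟩
      rw [LinearEquiv.trans_apply, consLift_apply]
      refine Fin.cases ?_ (fun i => ?_) i
      · simp
      · refine Fin.cases ?_ (fun j => ?_) j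
        · intro _
          rw [h1]
          have : Fin.tail (Pi.single 0 α : Fin (m+1) → R) = 0 := by
            ext k; simp [Fin.tail]
          simp [this]
        · intro hij
          simp only [Fin.cons_succ]
          exact h2 j i (by simpa using hij)

end pid

/-- every unimodular vector over `R` is the first column of an invertible matrix -/
def Cpl (R : Type) [CommRing R] : Prop :=
  ∀ (m : ℕ) (v : Fin (m+1) → R), (∃ w, w ⬝ᵥ v = 1) →
    ∃ D : Matrix (Fin (m+1)) (Fin (m+1)) R, IsUnit D.det ∧ D.col 0 = v

lemma Cpl.of_equiv {R S : Type} [CommRing R] [CommRing S] (e : R ≃+* S) (h : Cpl R) : Cpl S := by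
  rintro m v ⟨w, hw⟩
  obtain ⟨D, hD, hv⟩ := h m (e.symm ∘ v) ⟨e.symm ∘ w, by
    have := congrArg e.symm hw
    simpa [dotProduct, map_sum] using this⟩
  refine ⟨D.map e, ?_, ?_⟩
  · have := hD.map e.toRingHom
    rw [RingHom.map_det] at this
    exact this
  · ext i
    have := congrFun hv i
    simp only [Matrix.col_apply, Function.comp] at this
    simp [Matrix.col_apply, this]

lemma unit_matrix_of_equiv {R ι : Type*} [CommRing R] [Fintype ι] [DecidableEq ι]
    (e : (ι → R) ≃ₗ[R] (ι → R)) :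
    ∃ D : Matrix ι ι R, IsUnit D.det ∧ ∀ v, D.mulVec v = e v := by
  refine ⟨LinearMap.toMatrix' e.toLinearMap, ?_, fun v => ?_⟩
  · rw [LinearMap.det_toMatrix']
    exact e.isUnit_det'
  · rw [LinearMap.toMatrix'_mulVec]; rfl

lemma Cpl.of_pid (R : Type) [CommRing R] [IsDomain R] [IsPrincipalIdealRing R] : Cpl R := by
  rintro m v ⟨w, hw⟩
  obtain ⟨e, α, he⟩ := pid_vec m v
  have hv : v = α • e.symm (Pi.single 0 1) := by
    rw [← map_smul, LinearEquiv.eq_symm_apply, he]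
    ext i; simp [Pi.single_apply]
  have hα : IsUnit α := by
    refine IsUnit.of_mul_eq_one (w ⬝ᵥ e.symm (Pi.single 0 1)) ?_
    rw [← smul_eq_mul, ← dotProduct_smul, ← hv, hw]
  obtain ⟨D, hD, hDv⟩ := unit_matrix_of_equiv e.symm
  refine ⟨α • D, ?_, ?_⟩
  · rw [Matrix.det_smul]
    exact (hα.pow _).mul hD
  · rw [hv, ← hDv]
    ext i
    simp [Matrix.col_apply]

end FML

namespace FML
open Polynomial

lemma monic_eval {B : Type*} [CommRing B] [Nontrivial B] (p : B[X][X]) (m : ℕ) (h : p.natDegree ≤ m)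
    (hm : (p.coeff m).Monic) : ∃ L : ℕ, (p.eval (X ^ L)).Monic := by
  obtain ⟨L, hL⟩ : ∃ L : ℕ, ∀ i ∈ Finset.range m, (p.coeff i).natDegree < L := by
    refine ⟨(Finset.range m).sup (fun i => (p.coeff i).natDegree) + 1, fun i hi => ?_⟩
    exact Nat.lt_succ_of_le (Finset.le_sup (f := fun i => (p.coeff i).natDegree) hi)
  refine ⟨L, ?_⟩
  rw [eval_eq_sum_range' (Nat.lt_succ_of_le h), Finset.sum_range_succ, add_comm]
  have hmon : (p.coeff m * (X ^ L) ^ m).Monic := hm.mul ((monic_X_pow L).pow m)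
  refine hmon.add_of_left ?_
  refine (degree_sum_le _ _).trans_lt ?_
  rw [Finset.sup_lt_iff (by rw [bot_lt_iff_ne_bot, Ne, degree_eq_bot]; exact hmon.ne_zero)]
  intro i hi
  rw [degree_eq_natDegree hmon.ne_zero]
  refine lt_of_le_of_lt degree_le_natDegree ?_
  rw [Nat.cast_lt]
  have h1 : (p.coeff i * (X ^ L) ^ i).natDegree ≤ (p.coeff i).natDegree + L * i := by
    refine natDegree_mul_le.trans ?_
    rw [← pow_mul, natDegree_X_pow]
  have h2 : (p.coeff m * (X ^ L) ^ m).natDegree = (p.coeff m).natDegree + L * m := by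
    rw [hm.natDegree_mul' (by rw [← pow_mul]; exact (monic_X_pow _).ne_zero), ← pow_mul,
      natDegree_X_pow]
  have h3 := hL i hi
  have h4 : L * (i + 1) ≤ L * m := Nat.mul_le_mul_left _ (Finset.mem_range.1 hi)
  rw [h2]
  rw [mul_add, mul_one] at h4
  omega

lemma nak {B : Type*} [CommRing B] [IsLocalRing B] (I : Ideal B[X]) (h : B[X]) (hm : h.Monic)
    (hI : h ∈ I) (b : B[X]) (hb : b ∈ I) (hb1 : b.map (IsLocalRing.residue B) = 1) : I = ⊤ := by
  have := hm.finite_quotient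
  have hle : Ideal.span {h} ≤ I := by
    rw [Ideal.span_le]; simpa using hI
  have hfin : Module.Finite B (B[X] ⧸ I) :=
    Module.Finite.of_surjective (Ideal.Quotient.factorₐ B hle).toLinearMap
      (Ideal.Quotient.factor_surjective hle)
  have key : (⊤ : Submodule B (B[X] ⧸ I)) ≤ IsLocalRing.maximalIdeal B • ⊤ := by
    rintro q -
    obtain ⟨z, rfl⟩ := Ideal.Quotient.mk_surjective q
    have e1 : Ideal.Quotient.mk I z = Ideal.Quotient.mk I (z * (1 - b)) := by
      rw [Ideal.Quotient.eq]
      have : z - z * (1 - b) = z * b := by ring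
      rw [this]
      exact I.mul_mem_left _ hb
    rw [e1]
    have e2 : (z * (1 - b)).map (IsLocalRing.residue B) = 0 := by
      rw [Polynomial.map_mul, Polynomial.map_sub, hb1]; simp
    generalize z * (1 - b) = y at e2
    rw [y.as_sum_range_C_mul_X_pow, map_sum]
    refine Submodule.sum_mem _ fun i _ => ?_
    have : Ideal.Quotient.mk I (C (y.coeff i) * X ^ i) = y.coeff i • Ideal.Quotient.mk I (X ^ i) := by
      rw [← smul_eq_C_mul]; rfl
    rw [this]
    refine Submodule.smul_mem_smul ?_ trivial
    rw [← IsLocalRing.residue_eq_zero_iff, ← coeff_map, e2, coeff_zero]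
  have := Submodule.eq_bot_of_le_smul_of_le_jacobson_bot _ _ hfin.fg_top key
    (IsLocalRing.maximalIdeal_le_jacobson _)
  rw [Ideal.eq_top_iff_one, ← Ideal.Quotient.eq_zero_iff_mem]
  have h1 : (Ideal.Quotient.mk I 1) ∈ (⊤ : Submodule B (B[X] ⧸ I)) := trivial
  rw [this] at h1
  simpa using h1

lemma horrocks_local {B : Type} [CommRing B] [IsLocalRing B] (m : ℕ) (v w : Fin (m+2) → B[X])
    (hw : w ⬝ᵥ v = 1) (D : Matrix (Fin (m+2)) (Fin (m+2)) B[X]) (hD0 : D.col 0 = v)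
    (hD : D.det.Monic) :
    ∃ D' : Matrix (Fin (m+2)) (Fin (m+2)) B[X], IsUnit D'.det ∧ D'.col 0 = v := by
  classical
  let ρ : B[X] →+* (IsLocalRing.ResidueField B)[X] := mapRingHom (IsLocalRing.residue B)
  have hρ : Function.Surjective ρ := Polynomial.map_surjective _ IsLocalRing.residue_surjective
  obtain ⟨e, he⟩ := pid_tri (R := (IsLocalRing.ResidueField B)[X]) (m+2) (m+2) (fun j i => ρ (D i j))
  let E : Fin (m+2) → Fin (m+2) → (IsLocalRing.ResidueField B)[X] := fun j => e.symm (Pi.single j 1)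
  have hEx : ∀ y : Fin (m+2) → (IsLocalRing.ResidueField B)[X], y = ∑ i, (e y i) • E i := by
    intro y
    apply e.injective
    rw [map_sum]
    simp only [E, map_smul, LinearEquiv.apply_symm_apply]
    ext i
    simp [Pi.single_apply]
  choose G hG using fun (j i : Fin (m+2)) => hρ (E j i)
  have hDcol : ∀ i, D i 0 = v i := fun i => congrFun hD0 i
  -- the first column
  have hv : (fun i => ρ (v i)) = (e (fun i => ρ (v i)) 0) • E 0 := by
    conv_lhs => rw [hEx (fun i => ρ (v i))]
    refine Finset.sum_eq_single 0 (fun i _ hi => ?_) (by simp)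
    have := he 0 i (by simpa using Fin.pos_iff_ne_zero.2 hi)
    simp only [hDcol] at this
    rw [this, zero_smul]
  have hα : IsUnit (e (fun i => ρ (v i)) 0) := by
    refine IsUnit.of_mul_eq_one ((fun i => ρ (w i)) ⬝ᵥ E 0) ?_
    rw [← smul_eq_mul, ← dotProduct_smul, ← hv]
    have := congrArg ρ hw
    simpa [dotProduct, map_sum] using this
  have hlast : (Fin.last (m+1)) ≠ 0 := by simp [Fin.ext_iff]
  let G'' : Matrix (Fin (m+2)) (Fin (m+2)) B[X] := fun i j =>
    if j = 0 ∨ j = Fin.last (m+1) then 0 else G (j+1) i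
  have hGa : ∀ i j, G'' i j = if j = 0 ∨ j = Fin.last (m+1) then 0 else G (j+1) i := fun _ _ => rfl
  obtain ⟨L, hL⟩ := monic_eval ((X : B[X][X]) • D.map C + G''.map C).det (m+2)
    (by simpa using natDegree_det_X_add_C_le D G'') (by
      have := coeff_det_X_add_C_card D G''
      rw [Fintype.card_fin] at this
      rwa [this])
  have hev : (((X : B[X][X]) • D.map C + G''.map C).det).eval (X ^ L) = ((X ^ L : B[X]) • D + G'').det := by
    rw [← coe_evalRingHom, RingHom.map_det]
    congr 1
    ext1 i j
    simp
    ring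
  rw [hev] at hL
  let W : Matrix (Fin (m+2)) (Fin (m+2)) B[X] := fun i j =>
    if j = 0 then D i 0 else if j = Fin.last (m+1) then 0 else G (j+1) i + X ^ L * D i j
  have hWa : ∀ i j, W i j = if j = 0 then D i 0 else if j = Fin.last (m+1) then 0 else G (j+1) i + X ^ L * D i j :=
    fun _ _ => rfl
  let ℓ : (Fin (m+2) → B[X]) →ₗ[B[X]] B[X] := (LinearMap.proj (Fin.last (m+1))).comp W.cramer
  have hℓ : ∀ y, ℓ y = (W.updateCol (Fin.last (m+1)) y).det := fun y => by
    simp [ℓ, Matrix.cramer_apply]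
  have hmem1 : ((X ^ L : B[X]) • D + G'').det ∈ LinearMap.range ℓ := by
    have : ((X ^ L : B[X]) • D + G'') = (W.updateCol (Fin.last (m+1)) (D.col (Fin.last (m+1)))) *
        Matrix.diagonal (fun j => if j = 0 ∨ j = Fin.last (m+1) then X ^ L else 1) := by
      ext1 i j
      rw [Matrix.mul_diagonal]
      by_cases h0 : j = 0
      · subst h0
        simp [hGa, hWa, Matrix.updateCol_apply, hlast.symm, mul_comm]
      · by_cases h1 : j = Fin.last (m+1)
        · subst h1
          simp [hGa, Matrix.updateCol_apply, mul_comm]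
        · simp [hGa, hWa, Matrix.updateCol_apply, h0, h1, add_comm]
    rw [this, Matrix.det_mul, ← hℓ, mul_comm]
    exact Ideal.mul_mem_left (LinearMap.range ℓ) _ (LinearMap.mem_range_self _ _)
  let N : Matrix (Fin (m+2)) (Fin (m+2)) (IsLocalRing.ResidueField B)[X] :=
    (W.updateCol (Fin.last (m+1)) (G 1)).map ρ
  have hNcol : ∀ j, N.col j ∈ LinearMap.range N.mulVecLin := fun j =>
    ⟨Pi.single j 1, by simp⟩
  have hE : ∀ (j : ℕ) (hj : j < m + 2), E ⟨j, hj⟩ ∈ LinearMap.range N.mulVecLin := by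
    intro j
    induction j using Nat.strong_induction_on with
    | _ j ih =>
    intro hj
    rcases j with _ | j
    · have h0 : N.col 0 = (e (fun i => ρ (v i)) 0) • E 0 := by
        rw [← hv]
        ext1 i
        simp [N, Matrix.col_apply, hWa, Matrix.updateCol_apply, hlast.symm, hDcol]
      have h1 := hNcol 0
      rw [h0] at h1
      exact (Submodule.smul_mem_iff_of_isUnit _ hα).1 h1
    · rcases j with _ | j
      · have h0 : N.col (Fin.last (m+1)) = E 1 := by
          ext1 i
          simp [N, Matrix.col_apply, hG]
        have h1 := hNcol (Fin.last (m+1))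
        rw [h0] at h1
        exact h1
      · let j' : Fin (m+2) := ⟨j+1, by omega⟩
        have hj0 : j' ≠ 0 := by simp [j', Fin.ext_iff]
        have hjl : j' ≠ Fin.last (m+1) := by simp [j', Fin.ext_iff]; omega
        have hjs : j' + 1 = ⟨j+2, hj⟩ := by
          ext
          rw [Fin.val_add_one_of_lt (by rw [Fin.lt_def]; simp [j']; omega)]
        have h0 : N.col j' = E ⟨j+2, hj⟩ + (X ^ L : (IsLocalRing.ResidueField B)[X]) • (fun i => ρ (D i j')) := by
          ext1 i
          simp only [N, Matrix.col_apply, Matrix.map_apply, Matrix.updateCol_apply, if_neg hjl, hWa,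
            if_neg hj0, hjs, map_add, map_mul, map_pow, hG]
          simp [ρ]
        have h1 := hNcol j'
        rw [h0] at h1
        refine (Submodule.add_mem_iff_left _ ?_).1 h1
        refine Submodule.smul_mem _ _ ?_
        rw [hEx (fun i => ρ (D i j'))]
        refine Submodule.sum_mem _ fun i _ => ?_
        by_cases hi : j + 1 < i.val
        · rw [he j' i hi, zero_smul]
          exact Submodule.zero_mem _
        · exact Submodule.smul_mem _ _ (ih i.val (by omega) i.2)
  have hNu : IsUnit N.det := by
    rw [← Matrix.isUnit_iff_isUnit_det, ← Matrix.mulVec_surjective_iff_isUnit]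
    intro y
    have : y ∈ LinearMap.range N.mulVecLin := by
      rw [hEx y]
      exact Submodule.sum_mem _ fun i _ => Submodule.smul_mem _ _ (hE i.val i.2)
    exact this
  have hNdet : N.det = ρ (ℓ (G 1)) := by
    rw [hℓ, RingHom.map_det]; rfl
  obtain ⟨u, hu⟩ := hNu.exists_left_inv
  obtain ⟨c, rfl⟩ := hρ u
  have htop := nak (LinearMap.range ℓ) _ hL hmem1 (ℓ (c • G 1)) (LinearMap.mem_range_self _ _) (by
    change ρ _ = 1
    rw [map_smul, smul_eq_mul, map_mul, ← hNdet, hu])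
  have h1 : (1 : B[X]) ∈ LinearMap.range ℓ := by rw [htop]; trivial
  obtain ⟨y, hy⟩ := h1
  refine ⟨W.updateCol (Fin.last (m+1)) y, by rw [← hℓ, hy]; exact isUnit_one, ?_⟩
  ext1 i
  simp [Matrix.col_apply, Matrix.updateCol_apply, hlast.symm, hWa, hDcol]

end FML

namespace FML
open Polynomial

def VEq {C ι : Type} [CommRing C] [Fintype ι] [DecidableEq ι] (a b : ι → C) : Prop :=
  ∃ G : Matrix ι ι C, IsUnit G.det ∧ G.mulVec a = b

section
variable {C ι : Type} [CommRing C] [Fintype ι] [DecidableEq ι] {a b c : ι → C}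

lemma VEq.refl (a : ι → C) : VEq a a := ⟨1, by simp, by simp⟩

lemma VEq.trans (h : VEq a b) (h' : VEq b c) : VEq a c := by
  obtain ⟨G, hG, rfl⟩ := h
  obtain ⟨G', hG', rfl⟩ := h'
  exact ⟨G' * G, by rw [Matrix.det_mul]; exact hG'.mul hG, by rw [Matrix.mulVec_mulVec]⟩

lemma VEq.symm (h : VEq a b) : VEq b a := by
  obtain ⟨G, hG, rfl⟩ := h
  refine ⟨G⁻¹, Matrix.isUnit_nonsing_inv_det G hG, ?_⟩
  rw [Matrix.mulVec_mulVec, Matrix.nonsing_inv_mul _ hG, Matrix.one_mulVec]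

lemma VEq.map {C' : Type} [CommRing C'] (f : C →+* C') (h : VEq a b) :
    VEq (fun i => f (a i)) (fun i => f (b i)) := by
  obtain ⟨G, hG, rfl⟩ := h
  refine ⟨G.map f, ?_, ?_⟩
  · have := hG.map f
    rwa [RingHom.map_det] at this
  · ext i
    simp [Matrix.mulVec, dotProduct, map_sum]
end

/-- bounded denominators -/
def Den {R S : Type} [CommRing R] [CommRing S] (φ : R →+* S) (M : Submonoid R) : Prop :=
  ∀ z : S, ∃ s ∈ M, ∃ h, φ h = φ s * z

lemma Den.family {R S : Type} [CommRing R] [CommRing S] {φ : R →+* S} {M : Submonoid R}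
    (H : Den φ M) {κ : Type} (t : Finset κ) (z : κ → S) :
    ∃ s ∈ M, ∀ i ∈ t, ∃ h, φ h = φ s * z i := by
  classical
  induction t using Finset.induction_on with
  | empty => exact ⟨1, M.one_mem, by simp⟩
  | insert a t ha ih =>
    obtain ⟨s, hs, hz⟩ := ih
    obtain ⟨s', hs', h', hh'⟩ := H (z a)
    refine ⟨s * s', M.mul_mem hs hs', fun i hi => ?_⟩
    rcases Finset.mem_insert.1 hi with rfl | hi
    · exact ⟨s * h', by rw [map_mul, hh', map_mul]; ring⟩
    · obtain ⟨h, hh⟩ := hz i hi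
      exact ⟨s' * h, by rw [map_mul, hh, map_mul]; ring⟩

lemma Den.fintype {R S : Type} [CommRing R] [CommRing S] {φ : R →+* S} {M : Submonoid R}
    (H : Den φ M) {κ : Type} [Fintype κ] (z : κ → S) :
    ∃ s ∈ M, ∃ h : κ → R, ∀ i, φ (h i) = φ s * z i := by
  obtain ⟨s, hs, hz⟩ := H.family Finset.univ z
  choose h hh using fun i => hz i (Finset.mem_univ i)
  exact ⟨s, hs, h, hh⟩

lemma Den.poly {R S : Type} [CommRing R] [CommRing S] {φ : R →+* S} {M : Submonoid R}
    (H : Den φ M) : Den (mapRingHom φ) (M.map C) := by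
  intro z
  obtain ⟨s, hs, hz⟩ := H.family z.support (fun i => z.coeff i)
  refine ⟨C s, ⟨s, hs, rfl⟩, ?_⟩
  choose! h hh using hz
  refine ⟨∑ i ∈ z.support, C (h i) * X ^ i, ?_⟩
  rw [map_sum]
  conv_rhs => rw [z.as_sum_support_C_mul_X_pow, Finset.mul_sum]
  refine Finset.sum_congr rfl fun i hi => ?_
  simp [hh i hi, mul_assoc]

set_option maxHeartbeats 2000000 in
lemma patch_aux {B ι : Type} [CommRing B] [IsDomain B] [Fintype ι] [DecidableEq ι] (i₀ : ι)
    (v : ι → B[X]) (K : Type) [CommRing K] [IsDomain K] [Algebra B K] (M : Submonoid B)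
    (hinj : Function.Injective (algebraMap B K)) (hden : Den (algebraMap B K) M)
    (D : Matrix ι ι K[X]) (hD : IsUnit D.det) (hv : ∀ i, D i i₀ = (v i).map (algebraMap B K)) :
    ∃ s ∈ M, ∀ (C : Type) [CommRing C] [Algebra B C] (x y : C),
      VEq (fun i => aeval (x + s • y) (v i)) (fun i => aeval x (v i)) := by
  let φ : B[X][X] →ₐ[B] K[X][X] := mapAlgHom (mapAlgHom (Algebra.ofId B K))
  have hφinj : Function.Injective φ := by
    apply Polynomial.map_injective
    exact Polynomial.map_injective _ hinj
  have hφden : Den (φ : B[X][X] →+* K[X][X]) ((M.map C).map C) := hden.poly.poly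
  let τ : K[X] →ₐ[K] K[X][X] := aeval (C X + X)
  let D' := D⁻¹
  have hDD' : D * D' = 1 := Matrix.mul_nonsing_inv _ hD
  have hD'D : D' * D = 1 := Matrix.nonsing_inv_mul _ hD
  let G : Matrix ι ι K[X][X] := D.map C * D'.map τ
  let ε : K[X][X] →+* K[X] := evalRingHom 0
  have hετ : ∀ p, ε (τ p) = p := by
    intro p
    have : ((Polynomial.aeval (0 : K[X]) : K[X][X] →ₐ[K[X]] K[X]).restrictScalars K).comp τ = AlgHom.id K _ := by
      ext; simp [τ]
    have := DFunLike.congr_fun this p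
    simpa [ε, Polynomial.coe_aeval_eq_eval] using this
  have hG0 : G.map ε = 1 := by
    have h1 : G.map ε = (D.map C).map ε * (D'.map τ).map ε := by
      rw [← Matrix.map_mul]
    rw [h1]
    have h2 : (D.map C).map ε = D := by ext1 i j; simp [ε]
    have h3 : (D'.map τ).map ε = D' := by ext1 i j; simp [hετ]
    rw [h2, h3, hDD']
  have hGdet : IsUnit G.det := by
    rw [Matrix.det_mul]
    refine IsUnit.mul ?_ ?_
    · have := hD.map (C : K[X] →+* K[X][X])
      rwa [RingHom.map_det] at this
    · have h1 : IsUnit D'.det := Matrix.isUnit_nonsing_inv_det D hD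
      have := h1.map (τ : K[X] →+* K[X][X])
      rwa [RingHom.map_det] at this
  have hGdet1 : G.det = 1 := by
    obtain ⟨r, hr, hr'⟩ := Polynomial.isUnit_iff.1 hGdet
    have : ε G.det = 1 := by rw [RingHom.map_det]; change (G.map ε).det = 1; rw [hG0, Matrix.det_one]
    rw [← hr'] at this ⊢
    simp [ε] at this
    rw [this, C_1]
  let vK : ι → K[X] := fun i => (v i).map (algebraMap B K)
  have hGv : G.mulVec (fun i => τ (vK i)) = fun i => C (vK i) := by
    have h1 : (fun i => τ (vK i)) = (D.map τ).mulVec (Pi.single i₀ 1) := by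
      ext1 i; simp [vK, hv]
    rw [h1, Matrix.mulVec_mulVec, Matrix.mul_assoc]
    have h2 : D'.map τ * D.map τ = 1 := by
      rw [← Matrix.map_mul, hD'D]; simp
    rw [h2]
    ext1 i
    simp [vK, hv]
  -- decomposition
  let Z : Matrix ι ι K[X][X] := fun i j => divX (G i j)
  have hGZ : ∀ i j, G i j = (1 : Matrix ι ι K[X][X]) i j + X * Z i j := by
    intro i j
    have h1 : X * divX (G i j) + C ((G i j).coeff 0) = G i j := X_mul_divX_add _
    have h2 : (G i j).coeff 0 = (1 : Matrix ι ι K[X]) i j := by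
      have := congrFun (congrFun hG0 i) j
      rw [← this]
      simp [ε, coeff_zero_eq_eval_zero]
    rw [h2] at h1
    conv_lhs => rw [← h1]
    rw [add_comm]
    congr 1
    rw [Matrix.one_apply, Matrix.one_apply]
    split <;> simp
  obtain ⟨s', hs', H, hH⟩ := hφden.fintype (fun ij : ι × ι => Z ij.1 ij.2)
  obtain ⟨_, ⟨s, hs, rfl⟩, rfl⟩ := hs'
  refine ⟨s, hs, ?_⟩
  let σB : B[X][X] →ₐ[B[X]] B[X][X] := aeval (C (C s) * X)
  let σK : K[X][X] →ₐ[K[X]] K[X][X] := aeval (C (C (algebraMap B K s)) * X)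
  have hσ : ∀ p, φ (σB p) = σK (φ p) := by
    intro p
    have : φ.comp (σB.restrictScalars B) = (σK.restrictScalars B).comp φ := by
      ext
      · simp [φ, σB, σK]
      · simp [φ, σB, σK]
    exact DFunLike.congr_fun this p
  let Gt : Matrix ι ι B[X][X] := fun i j => (1 : Matrix ι ι B[X][X]) i j + X * σB (H (i, j))
  have hGt : Gt.map φ = G.map σK := by
    ext1 i j
    rw [Matrix.map_apply, Matrix.map_apply, hGZ]
    simp only [Gt, map_add, map_mul, hσ]
    have := hH (i, j)
    simp only [RingHom.coe_coe] at this
    rw [this]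
    simp only [Matrix.one_apply]
    congr 1
    · split <;> simp
    · simp [φ, σK]
      ring
  have hdet : Gt.det = 1 := by
    apply hφinj
    have h1 : φ Gt.det = (Gt.map φ).det := RingHom.map_det (φ : B[X][X] →+* K[X][X]) Gt
    have h2 : σK G.det = (G.map σK).det := RingHom.map_det (σK : K[X][X] →+* K[X][X]) G
    rw [h1, hGt, ← h2, hGdet1]
    simp
  have hτ : ∀ p : B[X], σK (τ (p.map (algebraMap B K))) = φ (aeval (C X + C (C s) * X : B[X][X]) p) := by
    intro p
    have : ((σK.restrictScalars B).comp (τ.restrictScalars B)).comp (mapAlgHom (Algebra.ofId B K)) =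
        φ.comp (aeval (C X + C (C s) * X : B[X][X])) := by
      ext; simp [φ, τ, σK]
    exact DFunLike.congr_fun this p
  have hmul : Gt.mulVec (fun i => aeval (C X + C (C s) * X : B[X][X]) (v i)) = fun i => C (v i) := by
    ext1 i
    apply hφinj
    have h1 := congrArg σK (congrFun hGv i)
    have h2 : σK (C (vK i)) = φ (C (v i)) := by
      simp [σK, φ, vK]
    rw [← h2, ← h1]
    simp only [Matrix.mulVec, dotProduct, map_sum, map_mul]
    refine Finset.sum_congr rfl fun j _ => ?_
    rw [← hτ]
    congr 1
    exact congrFun (congrFun hGt i) j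
  intro C' _ _ x y
  let ev : B[X][X] →+* C' := eval₂RingHom (aeval x : B[X] →ₐ[B] C').toRingHom y
  have h := VEq.map ev ⟨Gt, by rw [hdet]; exact isUnit_one, hmul⟩
  convert h using 2 with i i
  · rw [aeval_def, aeval_def, hom_eval₂]
    have h1 : ev.comp (algebraMap B B[X][X]) = algebraMap B C' := by
      ext b
      change ev (C (C b)) = _
      simp [ev]
    have h2 : ev (C X + C (C s) * X) = x + s • y := by
      simp [ev, Algebra.smul_def]
    rw [h1, h2]
  · simp [ev]

/-- equivalence with the value at zero -/
lemma patch {B ι : Type} [CommRing B] [IsDomain B] [Fintype ι] [DecidableEq ι] (i₀ : ι)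
    (v : ι → B[X]) (h : ∀ (P : Ideal B) [P.IsPrime], ∃ D : Matrix ι ι (Localization.AtPrime P)[X],
      IsUnit D.det ∧ ∀ i, D i i₀ = (v i).map (algebraMap B _)) :
    VEq v (fun i => C ((v i).eval 0)) := by
  let J : Ideal B :=
    { carrier := {b | ∀ (C : Type) [CommRing C] [Algebra B C] (x y : C),
        VEq (fun i => aeval (x + b • y) (v i)) (fun i => aeval x (v i))}
      add_mem' := by
        intro a b ha hb C _ _ x y
        have h1 := ha C x y
        have h2 := hb C (x + a • y) y
        rw [add_assoc, ← add_smul] at h2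
        exact h2.trans h1
      zero_mem' := by
        intro C _ _ x y
        simp only [zero_smul, add_zero]
        exact VEq.refl _
      smul_mem' := by
        intro c b hb C _ _ x y
        have := hb C x (c • y)
        rwa [smul_smul, mul_comm] at this }
  have hJ : J = ⊤ := by
    by_contra hne
    obtain ⟨P, hP, hle⟩ := Ideal.exists_le_maximal J hne
    have := hP.isPrime
    obtain ⟨D, hD, hv⟩ := h P
    obtain ⟨s, hs, H⟩ := patch_aux i₀ v (Localization.AtPrime P) P.primeCompl
      (IsLocalization.injective _ P.primeCompl_le_nonZeroDivisors) (by
        intro z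
        obtain ⟨⟨a, s⟩, hs⟩ := IsLocalization.surj P.primeCompl z
        exact ⟨s, s.2, a, by rw [← hs, mul_comm]⟩) D hD hv
    exact hs (hle (show s ∈ J from H))
  have h1 : (1 : B) ∈ J := by rw [hJ]; trivial
  have h2 := h1 B[X] 0 X
  convert h2 using 2 with i i
  · simp
  · rw [aeval_def, eval₂_at_zero, coeff_zero_eq_eval_zero]; rfl

lemma unit_col_map {R S : Type} [CommRing R] [CommRing S] {ι : Type} [Fintype ι] [DecidableEq ι] (f : R →+* S)
    (D : Matrix ι ι R) : (D.map f).det = f D.det := (RingHom.map_det f D).symm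

/-- monic inversion -/
lemma monic_inversion {B : Type} [CommRing B] [IsDomain B] (m : ℕ) (v w : Fin (m+2) → B[X])
    (hw : w ⬝ᵥ v = 1) (D : Matrix (Fin (m+2)) (Fin (m+2)) B[X]) (hD0 : D.col 0 = v)
    (y : B[X]) (hD : (D.det * y).Monic) : VEq v (fun i => C ((v i).eval 0)) := by
  refine patch 0 v fun P hP => ?_
  let f := mapRingHom (algebraMap B (Localization.AtPrime P))
  let D1 := D.updateCol 1 (y • D.col 1)
  have h1 : D1.det = D.det * y := by
    rw [Matrix.det_updateCol_smul]
    have : D.updateCol 1 (D.col 1) = D := Matrix.updateCol_eq_self _ _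
    rw [this, mul_comm]
  obtain ⟨D', hD', hD'0⟩ := horrocks_local m (fun i => f (v i)) (fun i => f (w i)) (by
    have := congrArg f hw
    simpa [dotProduct, map_sum] using this) (D1.map f) (by
    ext1 i
    have := congrFun hD0 i
    simp only [Matrix.col_apply] at this
    simp [D1, Matrix.col_apply, Matrix.updateCol_apply, this]) (by
    rw [unit_col_map, h1]
    exact hD.map _)
  exact ⟨D', hD', fun i => congrFun hD'0 i⟩

end FML

namespace FML
open Polynomial

section
variable {A : Type} [CommRing A] [IsDomain A] [IsPrincipalIdealRing A]

lemma monic_mem : ∀ (c : A), c ≠ 0 → ∀ I : Ideal A[X], (∀ p : A, Prime p → ¬ I ≤ Ideal.span {C p}) →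
    C c ∈ I → ∃ m ∈ I, m.Monic := by
  intro c
  induction c using UniqueFactorizationMonoid.induction_on_prime with
  | h₁ => intro h; exact absurd rfl h
  | h₂ x hx =>
    intro _ I _ h
    rw [Ideal.eq_top_of_isUnit_mem I h (hx.map C)]
    exact ⟨1, trivial, monic_one⟩
  | h₃ a p ha hp ih =>
    intro _ I hI hc
    obtain ⟨g, hg, hgp⟩ := SetLike.not_le_iff_exists.1 (hI p hp)
    have hmax : (Ideal.span {p}).IsMaximal :=
      PrincipalIdealRing.isMaximal_of_irreducible hp.irreducible
    letI := Ideal.Quotient.field (Ideal.span {p})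
    have key : ∀ z : A[X], z.map (Ideal.Quotient.mk (Ideal.span {p})) = 0 → ∃ h, z = C p * h := by
      intro z hz
      have : z ∈ Ideal.map C (Ideal.span {p}) := by
        rw [Ideal.mem_map_C_iff]
        intro n
        rw [← Ideal.Quotient.eq_zero_iff_mem, ← coeff_map, hz, coeff_zero]
      rw [Ideal.map_span, Set.image_singleton, Ideal.mem_span_singleton'] at this
      obtain ⟨h, hh⟩ := this
      exact ⟨h, by rw [← hh, mul_comm]⟩
    have hg0 : g.map (Ideal.Quotient.mk (Ideal.span {p})) ≠ 0 := by
      intro h0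
      obtain ⟨h, rfl⟩ := key g h0
      exact hgp (Ideal.mul_mem_right _ _ (Ideal.subset_span rfl))
    set f := g.map (Ideal.Quotient.mk (Ideal.span {p})) with hf
    obtain ⟨u, hu⟩ := Ideal.Quotient.mk_surjective (f.leadingCoeff⁻¹)
    have hmon : (C u * g).map (Ideal.Quotient.mk (Ideal.span {p})) = f * C f.leadingCoeff⁻¹ := by
      rw [Polynomial.map_mul, map_C, hu, mul_comm]
    have hmon' : (f * C f.leadingCoeff⁻¹).Monic := monic_mul_leadingCoeff_inv hg0
    obtain ⟨m, hm, -, hmm⟩ := lifts_and_degree_eq_and_monic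
      (f := Ideal.Quotient.mk (Ideal.span {p})) (p := f * C f.leadingCoeff⁻¹) ⟨C u * g, hmon⟩ hmon'
    obtain ⟨h, hh⟩ := key (C u * g - m) (by rw [Polynomial.map_sub, hmon, hm, sub_self])
    have ham : C a * m ∈ I := by
      have : C a * m = C a * C u * g - h * C (p * a) := by
        rw [C_mul]; linear_combination (- C a) * hh
      rw [this]
      exact I.sub_mem (I.mul_mem_left _ hg) (I.mul_mem_left _ hc)
    let I' : Ideal A[X] := Submodule.comap (LinearMap.mulRight A[X] m) I
    have hI' : ∀ z, z ∈ I' ↔ z * m ∈ I := fun z => Iff.rfl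
    obtain ⟨m', hm', hm'm⟩ := ih ha I' (fun q hq hle => hI q hq (le_trans (fun z hz => by
      rw [hI']; exact I.mul_mem_right _ hz) hle)) ((hI' _).2 ham)
    exact ⟨m' * m, (hI' _).1 hm', hm'm.mul hmm⟩

lemma exists_prime_factor (d : A[X]) (h0 : d ≠ 0) (hd : d.natDegree ≠ 0) :
    ∃ q : A[X], Prime q ∧ q.natDegree ≠ 0 ∧ q ∣ d := by
  induction d using UniqueFactorizationMonoid.induction_on_prime with
  | h₁ => exact absurd rfl h0
  | h₂ x hx => exact absurd (natDegree_eq_zero_of_isUnit hx) hd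
  | h₃ a p ha hp ih =>
    by_cases hpd : p.natDegree = 0
    · rw [natDegree_mul hp.ne_zero ha, hpd, zero_add] at hd
      obtain ⟨q, hq, hqd, hqa⟩ := ih ha hd
      exact ⟨q, hq, hqd, hqa.mul_left _⟩
    · exact ⟨p, hp, hpd, dvd_mul_right _ _⟩

lemma const_mem (I : Ideal A[X]) (hI0 : I ≠ ⊥) (hI : ∀ q : A[X], Prime q → ¬ I ≤ Ideal.span {q}) :
    ∃ c : A, c ≠ 0 ∧ C c ∈ I := by
  classical
  have hex : ∃ n : ℕ, ∃ d ∈ I, d ≠ 0 ∧ d.natDegree = n := by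
    obtain ⟨d, hd, hd0⟩ := Submodule.exists_mem_ne_zero_of_ne_bot hI0
    exact ⟨_, d, hd, hd0, rfl⟩
  obtain ⟨d, hd, hd0, hdn⟩ := Nat.find_spec hex
  by_cases hn : d.natDegree = 0
  · obtain ⟨c, rfl⟩ := natDegree_eq_zero.1 hn
    exact ⟨c, fun h => hd0 (by rw [h, C_0]), hd⟩
  · exfalso
    obtain ⟨q, hq, hqn, hqd⟩ := exists_prime_factor d hd0 hn
    refine hI q hq fun z hz => ?_
    rw [Ideal.mem_span_singleton]
    let K := FractionRing A
    have hinj : Function.Injective (algebraMap A K) := IsFractionRing.injective A K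
    have hden : Den (algebraMap A K) (nonZeroDivisors A) := by
      intro z
      obtain ⟨⟨a, s⟩, hs⟩ := IsLocalization.surj (nonZeroDivisors A) z
      exact ⟨s, s.2, a, by rw [← hs, mul_comm]⟩
    let f := mapRingHom (algebraMap A K)
    have hf : Function.Injective f := Polynomial.map_injective _ hinj
    obtain ⟨_, ⟨c, hc, rfl⟩, h, hh⟩ := hden.poly.fintype ![f z / f d, f z % f d]
    have hc0 : c ≠ 0 := nonZeroDivisors.ne_zero hc
    have e0 := hh 0
    have e1 := hh 1
    change f _ = f _ * _ at e0
    change f _ = f _ * _ at e1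
    simp only [Matrix.cons_val_zero, Matrix.cons_val_one] at e0 e1
    have e2 : C c * z = h 0 * d + h 1 := by
      apply hf
      rw [map_add, map_mul, map_mul, e0, e1]
      linear_combination (- f (C c)) * (EuclideanDomain.div_add_mod (f z) (f d))
    have e3 : (h 1).degree < d.degree := by
      rw [← degree_map_eq_of_injective hinj (h 1), ← degree_map_eq_of_injective hinj d]
      change (f (h 1)).degree < (f d).degree
      rw [e1]
      have : f (C c) = C (algebraMap A K c) := by simp [f]
      rw [this, degree_C_mul (by rw [Ne, ← map_zero (algebraMap A K)]; exact fun h' => hc0 (hinj h'))]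
      refine EuclideanDomain.mod_lt (R := K[X]) (f z) ?_
      rw [Ne, ← map_zero f]
      exact fun h' => hd0 (hf h')
    have e4 : h 1 = 0 := by
      by_contra hne
      have h1I : h 1 ∈ I := by
        have : h 1 = C c * z - h 0 * d := by rw [e2]; ring
        rw [this]
        exact I.sub_mem (I.mul_mem_left _ hz) (I.mul_mem_left _ hd)
      have := Nat.find_min' hex ⟨h 1, h1I, hne, rfl⟩
      rw [← hdn] at this
      exact absurd (natDegree_lt_natDegree hne e3) (not_lt.2 this)
    rw [e4, add_zero] at e2
    have : q ∣ C c * z := by rw [e2]; exact hqd.mul_left _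
    rcases hq.dvd_or_dvd this with h' | h'
    · exfalso
      have := natDegree_le_of_dvd h' (by simpa using hc0)
      simp at this
      exact hqn this
    · exact h'

variable (A) in
def monics : Submonoid A[X] where
  carrier := {p | p.Monic}
  one_mem' := monic_one
  mul_mem' := fun ha hb => Monic.mul ha hb

omit [IsPrincipalIdealRing A] in
lemma monics_le : monics A ≤ nonZeroDivisors A[X] := fun p hp =>
  mem_nonZeroDivisors_of_ne_zero (Monic.ne_zero hp)

variable (A) in
abbrev RatX := Localization (monics A)

instance : IsDomain (RatX A) := IsLocalization.isDomain_localization monics_le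

instance : IsNoetherianRing (RatX A) := IsLocalization.isNoetherianRing (monics A) _ inferInstance

lemma ratX_den : Den (algebraMap A[X] (RatX A)) (monics A) := by
  intro z
  obtain ⟨⟨a, s⟩, hs⟩ := IsLocalization.surj (monics A) z
  exact ⟨s, s.2, a, by rw [← hs, mul_comm]⟩

instance : IsBezout (RatX A) := by
  rw [IsBezout.iff_span_pair_isPrincipal]
  intro x y
  obtain ⟨s, hs, h, hh⟩ := ratX_den.fintype ![x, y]
  have hu : IsUnit (algebraMap A[X] (RatX A) s) := IsLocalization.map_units _ (⟨s, hs⟩ : monics A)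
  letI := UniqueFactorizationMonoid.toGCDMonoid A[X]
  obtain ⟨a, b, ha, hb, hab⟩ := extract_gcd (h 0) (h 1)
  set d := gcd (h 0) (h 1)
  have e0 := hh 0
  have e1 := hh 1
  simp only [Matrix.cons_val_zero, Matrix.cons_val_one] at e0 e1
  by_cases hz : h 0 = 0 ∧ h 1 = 0
  · rw [hz.1, map_zero] at e0
    rw [hz.2, map_zero] at e1
    rw [(hu.mul_right_eq_zero).1 e0.symm, (hu.mul_right_eq_zero).1 e1.symm]
    exact ⟨0, by simp⟩
  let I := Ideal.span {a, b}
  have haI : a ∈ I := Ideal.subset_span (by simp)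
  have hbI : b ∈ I := Ideal.subset_span (by simp)
  have hI : ∀ q : A[X], Prime q → ¬ I ≤ Ideal.span {q} := by
    intro q hq hle
    have h1 := Ideal.mem_span_singleton.1 (hle haI)
    have h2 := Ideal.mem_span_singleton.1 (hle hbI)
    exact hq.not_isUnit (isUnit_of_dvd_unit (dvd_gcd h1 h2) hab)
  have hI0 : I ≠ ⊥ := by
    intro h0
    have h1 : a = 0 := by rw [h0] at haI; simpa using haI
    have h2 : b = 0 := by rw [h0] at hbI; simpa using hbI
    exact hz ⟨by rw [ha, h1, mul_zero], by rw [hb, h2, mul_zero]⟩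
  obtain ⟨c, hc, hcI⟩ := const_mem I hI0 hI
  obtain ⟨m, hm, hmm⟩ := monic_mem c hc I (fun p hp => hI (C p) (prime_C_iff.2 hp)) hcI
  obtain ⟨α, β, hαβ⟩ := Ideal.mem_span_pair.1 hm
  have hmu : IsUnit (algebraMap A[X] (RatX A) m) := IsLocalization.map_units _ (⟨m, hmm⟩ : monics A)
  refine ⟨algebraMap _ _ d, ?_⟩
  apply le_antisymm
  · rw [Ideal.span_le]
    rintro z (rfl | rfl)
    · rw [SetLike.mem_coe, Submodule.mem_span_singleton]
      obtain ⟨u, hu⟩ := hu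
      refine ⟨↑u⁻¹ * algebraMap _ _ a, ?_⟩
      rw [smul_eq_mul, mul_assoc, ← map_mul, mul_comm a, ← ha, e0, ← hu, ← mul_assoc, Units.inv_mul, one_mul]
    · rw [SetLike.mem_coe, Submodule.mem_span_singleton]
      obtain ⟨u, hu⟩ := hu
      refine ⟨↑u⁻¹ * algebraMap _ _ b, ?_⟩
      rw [smul_eq_mul, mul_assoc, ← map_mul, mul_comm b, ← hb, e1, ← hu, ← mul_assoc, Units.inv_mul, one_mul]
  · rw [Submodule.span_le, Set.singleton_subset_iff, SetLike.mem_coe]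
    refine Ideal.mem_span_pair.2 ?_
    obtain ⟨w, hw⟩ := hmu
    refine ⟨↑w⁻¹ * algebraMap _ _ (α * s), ↑w⁻¹ * algebraMap _ _ (β * s), ?_⟩
    have e5 : algebraMap A[X] (RatX A) (α * h 0 + β * h 1) = w * algebraMap _ _ d := by
      rw [hw, ← map_mul, ← hαβ]
      congr 1
      rw [ha, hb]
      ring
    have : algebraMap A[X] (RatX A) d = ↑w⁻¹ * (algebraMap A[X] (RatX A) (α * h 0 + β * h 1)) := by
      rw [e5, ← mul_assoc, Units.inv_mul, one_mul]
    rw [this]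
    simp only [map_add, map_mul, e0, e1]
    ring

instance : IsPrincipalIdealRing (RatX A) := inferInstance

end

lemma Cpl.of_VEq {R : Type} [CommRing R] {m : ℕ} {v v' : Fin (m+1) → R} (h : VEq v' v)
    (h' : ∃ D : Matrix (Fin (m+1)) (Fin (m+1)) R, IsUnit D.det ∧ D.col 0 = v') :
    ∃ D : Matrix (Fin (m+1)) (Fin (m+1)) R, IsUnit D.det ∧ D.col 0 = v := by
  obtain ⟨G, hG, rfl⟩ := h
  obtain ⟨D, hD, rfl⟩ := h'
  refine ⟨G * D, by rw [Matrix.det_mul]; exact hG.mul hD, ?_⟩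
  ext i
  simp [Matrix.col_apply, Matrix.mul_apply, Matrix.mulVec, dotProduct]

lemma Den.mvpoly {R S : Type} [CommRing R] [CommRing S] {φ : R →+* S} {M : Submonoid R}
    (H : Den φ M) (σ : Type) : Den (MvPolynomial.map (σ := σ) φ) (M.map MvPolynomial.C) := by
  intro z
  obtain ⟨s, hs, hz⟩ := H.family z.support (fun i => z.coeff i)
  refine ⟨MvPolynomial.C s, ⟨s, hs, rfl⟩, ?_⟩
  choose! h hh using hz
  refine ⟨∑ i ∈ z.support, MvPolynomial.monomial i (h i), ?_⟩
  rw [map_sum]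
  conv_rhs => rw [z.as_sum, Finset.mul_sum]
  refine Finset.sum_congr rfl fun i hi => ?_
  simp [hh i hi, MvPolynomial.C_mul_monomial]

theorem qs (r : ℕ) : ∀ (A : Type) [CommRing A] [IsDomain A] [IsPrincipalIdealRing A],
    Cpl (MvPolynomial (Fin r) A) := by
  induction r with
  | zero =>
    intro A _ _ _
    exact (Cpl.of_pid A).of_equiv (MvPolynomial.isEmptyRingEquiv A (Fin 0)).symm
  | succ r ih =>
    intro A _ _ _
    have key : Cpl (MvPolynomial (Fin r) A)[X] := by
      rintro m v ⟨w, hw⟩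
      rcases m with _ | m
      · refine ⟨Matrix.of fun i _ => v i, ?_, rfl⟩
        rw [Matrix.det_fin_one, Matrix.of_apply]
        simp [dotProduct] at hw
        exact IsUnit.of_mul_eq_one (w 0) (by rw [mul_comm]; exact hw)
      let sw : (MvPolynomial (Fin r) A)[X] ≃ₐ[A] MvPolynomial (Fin r) A[X] :=
        (MvPolynomial.optionEquivLeft A (Fin r)).symm.trans (MvPolynomial.optionEquivRight A (Fin r))
      have hsw : ∀ p : A[X], sw (p.map MvPolynomial.C) = MvPolynomial.C p := by
        intro p
        have : (sw : (MvPolynomial (Fin r) A)[X] →ₐ[A] _).comp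
            (mapAlgHom (Algebra.ofId A (MvPolynomial (Fin r) A))) =
            (IsScalarTower.toAlgHom A A[X] (MvPolynomial (Fin r) A[X])) := by
          ext
          simp [sw]
        exact DFunLike.congr_fun this p
      let φ : MvPolynomial (Fin r) A[X] →+* MvPolynomial (Fin r) (RatX A) := MvPolynomial.map (algebraMap A[X] (RatX A))
      have hφ : Function.Injective φ :=
        MvPolynomial.map_injective _ (IsLocalization.injective _ monics_le)
      let v' : Fin (m+2) → MvPolynomial (Fin r) (RatX A) := fun i => φ (sw (v i))
      obtain ⟨D', hD', hv'⟩ := ih (RatX A) (m+1) v' ⟨fun i => φ (sw (w i)), by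
        have := congrArg (fun z => φ (sw z)) hw
        simpa [dotProduct, map_sum] using this⟩
      obtain ⟨dinv, hdinv⟩ := hD'.exists_right_inv
      obtain ⟨_, ⟨s, hs, rfl⟩, H, hH⟩ := ((ratX_den (A := A)).mvpoly (Fin r)).fintype
        (fun x : Option (Fin (m+2) × Fin (m+2)) => x.elim dinv (fun ij => D' ij.1 ij.2))
      have hs : s.Monic := hs
      let D2 : Matrix (Fin (m+2)) (Fin (m+2)) (MvPolynomial (Fin r) A[X]) := fun i j =>
        if j = 0 then sw (v i) else H (some (i, j))
      have hD2a : ∀ i j, D2 i j = if j = 0 then sw (v i) else H (some (i, j)) := fun _ _ => rfl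
      have hD2 : D2.map φ = D' * Matrix.diagonal (fun j => if j = 0 then 1 else φ (MvPolynomial.C s)) := by
        ext1 i j
        rw [Matrix.mul_diagonal, Matrix.map_apply, hD2a]
        by_cases hj : j = 0
        · subst hj
          simp only [if_true, mul_one]
          exact (congrFun hv' i).symm
        · simp only [if_neg hj]
          exact (hH (some (i, j))).trans (mul_comm _ _)
      have hdet : D2.det * H none = MvPolynomial.C (s ^ (m+2)) := by
        apply hφ
        have h0 := hH none
        change φ (H none) = φ _ * dinv at h0
        rw [map_mul, ← unit_col_map (S := MvPolynomial (Fin r) (RatX A)) φ D2, hD2, Matrix.det_mul, h0, Matrix.det_diagonal, Fin.prod_univ_succ]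
        simp only [Fin.succ_ne_zero, if_false, if_true, Finset.prod_const, Finset.card_univ,
          Fintype.card_fin, one_mul, map_pow]
        linear_combination (φ (MvPolynomial.C s))^(m+2) * hdinv
      have hv0 := monic_inversion m v w hw (D2.map sw.symm) (by
        ext1 i
        simp [Matrix.col_apply, hD2a]) (sw.symm (H none)) (by
        have h1 : (D2.map sw.symm).det = sw.symm D2.det := unit_col_map (sw.symm.toRingEquiv.toRingHom) D2
        rw [h1, ← map_mul, hdet, ← hsw, AlgEquiv.symm_apply_apply]
        exact (hs.pow _).map _)
      refine Cpl.of_VEq hv0.symm ?_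
      obtain ⟨D, hD, hD0⟩ := ih A (m+1) (fun i => (v i).eval 0) ⟨fun i => (w i).eval 0, by
        have := congrArg (eval 0) hw
        simpa [dotProduct, eval_finsetSum] using this⟩
      refine ⟨D.map C, by rw [unit_col_map]; exact hD.map _, ?_⟩
      ext1 i
      simp only [Matrix.col_apply, Matrix.map_apply]
      exact congrArg C (congrFun hD0 i)
    exact key.of_equiv (MvPolynomial.finSuccEquiv A r).symm.toRingEquiv

end FML

namespace FML
open MvPolynomial

section kappa
variable {n : ℕ}

noncomputable def kapM (b : Fin n →₀ ℕ) : Fin n → MvPolynomial (Fin n) ℤ :=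
  if h : b.support.Nonempty then
    Pi.single (b.support.min' h) (monomial (b - Finsupp.single (b.support.min' h) 1) 1) else 0

noncomputable def kap : MvPolynomial (Fin n) ℤ →ₗ[ℤ] (Fin n → MvPolynomial (Fin n) ℤ) :=
  (basisMonomials (Fin n) ℤ).constr ℤ kapM

lemma kap_mono (b : Fin n →₀ ℕ) : kap (monomial b (1 : ℤ)) = kapM b := by
  have := (basisMonomials (Fin n) ℤ).constr_basis ℤ kapM b
  simpa [kap] using this

/-- `m` is the minimal variable of `b`. -/
def IsMinVar (b : Fin n →₀ ℕ) (m : Fin n) : Prop := b m ≠ 0 ∧ ∀ j, j < m → b j = 0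

lemma exists_minVar (b : Fin n →₀ ℕ) (hb : b ≠ 0) : ∃ m, IsMinVar b m := by
  have h : b.support.Nonempty := Finsupp.support_nonempty_iff.2 hb
  refine ⟨b.support.min' h, Finsupp.mem_support_iff.1 (Finset.min'_mem _ h), fun j hj => ?_⟩
  by_contra hne
  exact absurd (Finset.min'_le _ j (Finsupp.mem_support_iff.2 hne)) (not_le.2 hj)

lemma kapM_eq (b : Fin n →₀ ℕ) (m : Fin n) (h : IsMinVar b m) :
    kapM b = Pi.single m (monomial (b - Finsupp.single m 1) 1) := by
  have hne : b.support.Nonempty := ⟨m, Finsupp.mem_support_iff.2 h.1⟩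
  have : b.support.min' hne = m := by
    apply le_antisymm (Finset.min'_le _ _ (Finsupp.mem_support_iff.2 h.1))
    by_contra hlt
    exact Finsupp.mem_support_iff.1 (Finset.min'_mem _ hne) (h.2 _ (not_le.1 hlt))
  rw [kapM, dif_pos hne, this]

lemma kap_one : kap (1 : MvPolynomial (Fin n) ℤ) = 0 := by
  have : (1 : MvPolynomial (Fin n) ℤ) = monomial 0 1 := rfl
  rw [this, kap_mono, kapM, dif_neg (by simp)]

/-- multiplication form: minimal variable -/
lemma kap_X_mul (b : Fin n →₀ ℕ) (m : Fin n) (h : ∀ j, j < m → b j = 0) :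
    kap (X m * monomial b 1) = Pi.single m (monomial b (1 : ℤ)) := by
  have e : (X m * monomial b 1 : MvPolynomial (Fin n) ℤ) = monomial (Finsupp.single m 1 + b) 1 := by
    rw [X, monomial_mul, one_mul]
  rw [e, kap_mono, kapM_eq _ m]
  · rw [add_tsub_cancel_left]
  · constructor
    · simp
    · intro j hj
      simp [h j hj, hj.ne']

lemma mono_cases (b : Fin n →₀ ℕ) :
    b = 0 ∨ ∃ m b', (∀ j, j < m → b' j = 0) ∧ b = Finsupp.single m 1 + b' := by
  by_cases hb : b = 0
  · exact Or.inl hb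
  · obtain ⟨m, hm⟩ := exists_minVar b hb
    refine Or.inr ⟨m, b - Finsupp.single m 1, fun j hj => ?_, ?_⟩
    · simp [hm.2 j hj]
    · rw [add_tsub_cancel_of_le]
      rw [Finsupp.single_le_iff]
      exact Nat.one_le_iff_ne_zero.2 hm.1

lemma monomial_succ (m : Fin n) (b : Fin n →₀ ℕ) :
    (monomial (Finsupp.single m 1 + b) 1 : MvPolynomial (Fin n) ℤ) = X m * monomial b 1 := by
  rw [X, monomial_mul, one_mul]

/-- additive induction on monomials -/
lemma mono_ind {n : ℕ} (p : MvPolynomial (Fin n) ℤ → Prop) (h0 : p 0) (hadd : ∀ a b, p a → p b → p (a + b))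
    (hneg : ∀ a, p a → p (-a)) (hm : ∀ b, p (monomial b 1)) : ∀ f, p f := by
  let S : AddSubgroup (MvPolynomial (Fin n) ℤ) :=
    { carrier := {f | p f}, zero_mem' := h0, add_mem' := fun {a b} => hadd a b, neg_mem' := fun {a} => hneg a }
  intro f
  change f ∈ S
  rw [f.as_sum]
  refine S.sum_mem fun b _ => ?_
  have : (monomial b (coeff b f) : MvPolynomial (Fin n) ℤ) = coeff b f • monomial b 1 := by
    rw [smul_monomial]; simp
  rw [this]
  exact S.zsmul_mem (hm b) _

lemma kap_dot (p : MvPolynomial (Fin n) ℤ) : ∑ j, X j * kap p j = p - C (constantCoeff p) := by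
  induction p using mono_ind with
  | h0 => simp
  | hadd a b ha hb =>
    simp only [map_add, Pi.add_apply, mul_add, Finset.sum_add_distrib, ha, hb]
    ring
  | hneg a ha =>
    simp only [map_neg, Pi.neg_apply, mul_neg, Finset.sum_neg_distrib, ha]
    ring
  | hm b =>
    rcases mono_cases b with rfl | ⟨m, b', h, rfl⟩
    · have : (monomial 0 1 : MvPolynomial (Fin n) ℤ) = 1 := rfl
      rw [this, kap_one]; simp
    · rw [monomial_succ, kap_X_mul b' m h]
      rw [Finset.sum_eq_single m]
      · simp
      · intro j _ hj; simp [hj]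
      · simp

lemma koszul' (f : Fin n → MvPolynomial (Fin n) ℤ) :
    ∃ s : Fin n → Fin n → MvPolynomial (Fin n) ℤ, (∀ i j, s i j = - s j i) ∧
      ∀ i, f i - kap (∑ j, X j * f j) i = ∑ k, s i k * X k := by
  let S : AddSubgroup (Fin n → MvPolynomial (Fin n) ℤ) :=
    { carrier := {f | ∃ s : Fin n → Fin n → MvPolynomial (Fin n) ℤ, (∀ i j, s i j = - s j i) ∧
        ∀ i, f i - kap (∑ j, X j * f j) i = ∑ k, s i k * X k}
      zero_mem' := ⟨0, by simp, by simp⟩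
      add_mem' := by
        rintro f g ⟨s, hs, hf⟩ ⟨s', hs', hg⟩
        refine ⟨s + s', fun i j => ?_, fun i => ?_⟩
        · simp only [Pi.add_apply]; rw [hs i j, hs' i j]; ring
        · simp only [Pi.add_apply, add_mul, mul_add, Finset.sum_add_distrib, map_add, ← hf, ← hg]; ring
      neg_mem' := by
        rintro f ⟨s, hs, hf⟩
        refine ⟨-s, fun i j => ?_, fun i => ?_⟩
        · simp only [Pi.neg_apply]; rw [hs i j]
        · simp only [Pi.neg_apply, neg_mul, mul_neg, Finset.sum_neg_distrib, map_neg, ← hf]; ring }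
  change f ∈ S
  have hf : f = ∑ j, Pi.single j (f j) := (Finset.univ_sum_single f).symm
  rw [hf]
  refine S.sum_mem fun j _ => ?_
  generalize f j = p
  induction p using mono_ind with
  | h0 => simp
  | hadd a b ha hb => rw [Pi.single_add]; exact S.add_mem ha hb
  | hneg a ha => rw [Pi.single_neg]; exact S.neg_mem ha
  | hm b =>
    have hdot : ∀ q : MvPolynomial (Fin n) ℤ, ∑ i, X i * (Pi.single j q : Fin n → MvPolynomial (Fin n) ℤ) i = X j * q := by
      intro q
      rw [Finset.sum_eq_single j]
      · simp
      · intro i _ hi; simp [hi]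
      · simp
    by_cases hjb : ∀ i, i < j → b i = 0
    · refine ⟨0, by simp, fun i => ?_⟩
      rw [hdot, kap_X_mul b j hjb]
      simp
    · push Not at hjb
      obtain ⟨i₀, hi₀, hb⟩ := hjb
      rcases mono_cases b with rfl | ⟨m, b', h, rfl⟩
      · simp at hb
      have hmj : m < j := by
        by_contra hle
        have hlt : i₀ < m := lt_of_lt_of_le hi₀ (not_lt.1 hle)
        apply hb
        simp [h _ hlt, hlt.ne']
      refine ⟨fun i k => if i = j ∧ k = m then monomial b' 1 else if i = m ∧ k = j then - monomial b' 1 else 0,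
        fun i k => ?_, fun i => ?_⟩
      · have := hmj.ne
        have := hmj.ne'
        beta_reduce
        split_ifs <;> simp_all
      · rw [hdot, monomial_succ]
        have e : (X j * (X m * monomial b' 1) : MvPolynomial (Fin n) ℤ) = X m * monomial (Finsupp.single j 1 + b') 1 := by
          rw [monomial_succ]; ring
        rw [e, kap_X_mul _ m (by
          intro i hi
          simp [h i hi, (hi.trans hmj).ne'])]
        rw [monomial_succ]
        by_cases hij : i = j
        · subst hij
          rw [Finset.sum_eq_single m]
          · simp [hmj.ne']; ring
          · intro k _ hk; simp [hk, hmj.ne']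
          · simp
        · by_cases him : i = m
          · subst him
            rw [Finset.sum_eq_single j]
            · simp [hmj.ne]; ring
            · intro k _ hk; simp [hk, hmj.ne]
            · simp
          · simp [hij, him]

lemma koszul (f : Fin n → MvPolynomial (Fin n) ℤ) (hf : ∑ j, X j * f j = 0) :
    ∃ s : Fin n → Fin n → MvPolynomial (Fin n) ℤ, (∀ i j, s i j = - s j i) ∧
      ∀ i, f i = ∑ k, s i k * X k := by
  obtain ⟨s, hs, h⟩ := koszul' f
  refine ⟨s, hs, fun i => ?_⟩
  rw [← h i, hf]
  simp

end kappa
end FML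

namespace FML

section
variable {R ι κ : Type} [CommRing R] [Fintype ι] [DecidableEq ι] [Fintype κ] [DecidableEq κ]

lemma VEq.reindex (e : κ ≃ ι) {a b : ι → R} (h : VEq (a ∘ e) (b ∘ e)) : VEq a b := by
  obtain ⟨G, hG, h⟩ := h
  refine ⟨Matrix.reindex e e G, by rwa [Matrix.det_reindex_self], ?_⟩
  ext i
  have := congrFun h (e.symm i)
  simp only [Matrix.mulVec, dotProduct, Function.comp, Equiv.apply_symm_apply] at this
  rw [← this]
  simp only [Matrix.mulVec, dotProduct]
  rw [← e.sum_comp]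
  simp

lemma VEq.span_le {a b : ι → R} (h : VEq a b) : Ideal.span (Set.range b) ≤ Ideal.span (Set.range a) := by
  obtain ⟨G, hG, rfl⟩ := h
  rw [Ideal.span_le]
  rintro _ ⟨i, rfl⟩
  exact Ideal.sum_mem _ fun j _ => Ideal.mul_mem_left _ _ (Ideal.subset_span ⟨j, rfl⟩)

lemma VEq.span {a b : ι → R} (h : VEq a b) : Ideal.span (Set.range a) = Ideal.span (Set.range b) :=
  le_antisymm h.symm.span_le h.span_le

lemma VEq.elem (a : ι → R) (b : κ → R) (N : Matrix κ ι R) :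
    VEq (Sum.elim a b) (Sum.elim a (b + N.mulVec a)) := by
  refine ⟨Matrix.fromBlocks 1 0 N 1, by simp [Matrix.det_fromBlocks_zero₁₂], ?_⟩
  rw [Matrix.fromBlocks_mulVec]
  simp [add_comm]

lemma VEq.inr (a : ι → R) {b b' : κ → R} (h : VEq b b') : VEq (Sum.elim a b) (Sum.elim a b') := by
  obtain ⟨G, hG, rfl⟩ := h
  refine ⟨Matrix.fromBlocks 1 0 0 G, by simpa [Matrix.det_fromBlocks_zero₁₂] using hG, ?_⟩
  rw [Matrix.fromBlocks_mulVec]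
  simp

lemma VEq.smul {a b : ι → R} (h : VEq a b) (c : R) : VEq (c • a) (c • b) := by
  obtain ⟨G, hG, rfl⟩ := h
  exact ⟨G, hG, by rw [Matrix.mulVec_smul]⟩

lemma mem_span_range {a : ι → R} {x : R} (h : x ∈ Ideal.span (Set.range a)) : ∃ w : ι → R, w ⬝ᵥ a = x := by
  obtain ⟨w, hw⟩ := (Submodule.mem_span_range_iff_exists_fun R).1 h
  exact ⟨w, by simpa [dotProduct] using hw⟩

lemma Cpl.gen (hR : Cpl R) (i₀ : ι) (v : ι → R) (h : ∃ w, w ⬝ᵥ v = 1) :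
    ∃ D : Matrix ι ι R, IsUnit D.det ∧ ∀ i, D i i₀ = v i := by
  obtain ⟨m, hm⟩ : ∃ m, Fintype.card ι = m + 1 :=
    Nat.exists_eq_succ_of_ne_zero (Fintype.card_pos_iff.2 ⟨i₀⟩).ne'
  let e0 : ι ≃ Fin (m+1) := Fintype.equivFinOfCardEq hm
  let e : ι ≃ Fin (m+1) := e0.trans (Equiv.swap (e0 i₀) 0)
  have he : e i₀ = 0 := by simp [e]
  obtain ⟨w, hw⟩ := h
  obtain ⟨D, hD, hv⟩ := hR m (v ∘ e.symm) ⟨w ∘ e.symm, by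
    rw [← hw]; simp only [dotProduct, Function.comp]; exact e.symm.sum_comp (fun i => w i * v i)⟩
  refine ⟨Matrix.reindex e.symm e.symm D, by rwa [Matrix.det_reindex_self], fun i => ?_⟩
  have := congrFun hv (e i)
  simpa [he] using this
end

section
open Polynomial
variable {A ι κ : Type} [CommRing A] [Fintype ι] [DecidableEq ι] [Fintype κ] [DecidableEq κ]

/-- conjugation by `diag(1, X)` -/
lemma conjX [IsDomain A] (Q : Matrix (ι ⊕ κ) (ι ⊕ κ) A[X]) (hQ : IsUnit Q.det)
    (h0 : ∀ i k, (Q (.inl i) (.inr k)).coeff 0 = 0)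
    (a a' : ι → A[X]) (b b' : κ → A[X]) (h : Q.mulVec (Sum.elim a b) = Sum.elim a' b') :
    VEq (Sum.elim a ((X : A[X]) • b)) (Sum.elim a' ((X : A[X]) • b')) := by
  let Δ : Matrix (ι ⊕ κ) (ι ⊕ κ) A[X] := Matrix.diagonal (Sum.elim (fun _ => 1) (fun _ => X))
  let Q' : Matrix (ι ⊕ κ) (ι ⊕ κ) A[X] := Matrix.of fun x y =>
    match x, y with
    | .inl i, .inl j => Q (.inl i) (.inl j)
    | .inl i, .inr k => divX (Q (.inl i) (.inr k))
    | .inr i, .inl j => X * Q (.inr i) (.inl j)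
    | .inr i, .inr k => Q (.inr i) (.inr k)
  have hc : Q' * Δ = Δ * Q := by
    ext1 x y
    rw [Matrix.mul_diagonal, Matrix.diagonal_mul]
    rcases x with i | i <;> rcases y with j | j
    · simp [Q']
    · have := X_mul_divX_add (Q (.inl i) (.inr j))
      rw [h0, C_0, add_zero] at this
      simp only [Q', Matrix.of_apply, Sum.elim_inl, Sum.elim_inr, one_mul]
      rw [mul_comm, this]
    · simp [Q']
    · simp [Q', mul_comm]
  have hΔ : Δ.det ≠ 0 := by
    rw [Matrix.det_diagonal, Finset.prod_ne_zero_iff]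
    rintro (i | i) _ <;> simp
  have hdet : Q'.det = Q.det := by
    have := congrArg Matrix.det hc
    rw [Matrix.det_mul, Matrix.det_mul, mul_comm] at this
    exact mul_left_cancel₀ hΔ this
  have hΔv : ∀ (a : ι → A[X]) (b : κ → A[X]), Sum.elim a ((X : A[X]) • b) = Δ.mulVec (Sum.elim a b) := by
    intro a b
    ext1 x
    rw [Matrix.mulVec_diagonal]
    rcases x with i | i <;> simp
  refine ⟨Q', by rwa [hdet], ?_⟩
  rw [hΔv, hΔv, Matrix.mulVec_mulVec, hc, ← Matrix.mulVec_mulVec, h]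

lemma conjX' [IsDomain A] (hA : Cpl A[X]) (k₀ : κ) (a : ι → A[X]) (b : κ → A[X])
    (h : ∃ w, w ⬝ᵥ (Sum.elim a b) = 1) :
    VEq (Sum.elim (fun i => C ((a i).coeff 0)) ((X : A[X]) • fun i => C ((b i).coeff 0))) (Sum.elim a ((X : A[X]) • b)) := by
  obtain ⟨D, hD, hv⟩ := hA.gen (Sum.inr k₀ : ι ⊕ κ) _ h
  let ε : A[X] →+* A := constantCoeff
  let D0 := D.map ε
  have hD0 : IsUnit D0.det := by rw [unit_col_map]; exact hD.map _
  let Q := D * (D0⁻¹).map C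
  have hmap : ∀ Y Z : Matrix (ι ⊕ κ) (ι ⊕ κ) A[X], (Y * Z).map ε = Y.map ε * Z.map ε := fun Y Z => Matrix.map_mul
  have hQ0 : Q.map ε = 1 := by
    rw [hmap]
    have : (D0⁻¹.map C).map ε = D0⁻¹ := by ext1 i j; simp [ε]
    rw [this]
    exact Matrix.mul_nonsing_inv _ hD0
  refine conjX Q ?_ ?_ _ _ _ _ ?_
  · rw [Matrix.det_mul, unit_col_map]
    exact hD.mul ((Matrix.isUnit_nonsing_inv_det _ hD0).map _)
  · intro i k
    have := congrFun (congrFun hQ0 (.inl i)) (.inr k)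
    simpa [ε] using this
  · have h1 : Sum.elim (fun i => C ((a i).coeff 0)) (fun i => C ((b i).coeff 0)) =
        (D0.map C).mulVec (Pi.single (Sum.inr k₀) 1) := by
      ext1 x
      simp only [Matrix.mulVec_single_one, Matrix.col_apply, Matrix.map_apply, D0, hv]
      rcases x with i | i <;> simp [ε]
    rw [h1, Matrix.mulVec_mulVec, Matrix.mul_assoc]
    have h2 : (D0⁻¹).map C * D0.map C = 1 := by
      rw [← Matrix.map_mul, Matrix.nonsing_inv_mul _ hD0]; simp
    rw [h2, mul_one]
    ext1 x
    simp [hv]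

end
end FML

namespace FML

section
open Polynomial

lemma span_map {R S ι : Type} [CommRing R] [CommRing S] (f : R →+* S) {a b : ι → R}
    (h : Ideal.span (Set.range a) = Ideal.span (Set.range b)) :
    Ideal.span (Set.range fun i => f (a i)) = Ideal.span (Set.range fun i => f (b i)) := by
  have := congrArg (Ideal.map f) h
  rw [Ideal.map_span, Ideal.map_span, ← Set.range_comp, ← Set.range_comp] at this
  exact this

lemma skew_zero {R ι : Type} [CommRing R] [IsDomain R] [CharZero R] [Fintype ι] (s : ι → ι → R)
    (hs : ∀ i j, s i j = - s j i) (u : ι → R) : ∑ i, (∑ k, s i k * u k) * u i = 0 := by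
  have h : ∑ i, (∑ k, s i k * u k) * u i = - ∑ i, (∑ k, s i k * u k) * u i := by
    simp only [Finset.sum_mul]
    conv_lhs => rw [Finset.sum_comm]
    rw [← Finset.sum_neg_distrib]
    refine Finset.sum_congr rfl fun i _ => ?_
    rw [← Finset.sum_neg_distrib]
    refine Finset.sum_congr rfl fun j _ => ?_
    rw [hs j i]; ring
  exact self_eq_neg.1 h

lemma cplX (r : ℕ) : Cpl (MvPolynomial (Fin r) ℤ)[X] :=
  (qs (r+1) ℤ).of_equiv (MvPolynomial.finSuccEquiv ℤ r).toRingEquiv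

variable {r s : ℕ}

lemma unim_gen {A ι κ : Type} [CommRing A] [IsDomain A] [CharZero A] [Fintype ι] [Fintype κ]
    (t : ι → A) (kos : ∀ f : ι → A, ∑ j, t j * f j = 0 →
      ∃ s : ι → ι → A, (∀ i j, s i j = - s j i) ∧ ∀ i, f i = ∑ k, s i k * t k)
    (u : ι → A[X]) (c : κ → A[X])
    (h0 : ∀ j, (u j).coeff 0 = t j)
    (w1 : ι → A[X]) (w2 : κ → A[X])
    (hw : ∑ j, w1 j * u j + ∑ i, w2 i * (X * c i) = X) :
    ∃ w1 : ι → A[X], ∑ j, w1 j * u j + ∑ i, w2 i * c i = 1 := by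
  have h1 := congrArg (fun p => coeff p 0) hw
  simp only [coeff_add, finsetSum_coeff, mul_coeff_zero, h0, coeff_X_zero, zero_mul, mul_zero,
    Finset.sum_const_zero, add_zero] at h1
  obtain ⟨σ, hσ, he⟩ := kos (fun j => (w1 j).coeff 0) (by simpa [mul_comm] using h1)
  have h2 : ∀ j, ∃ e', w1 j = ∑ k, C (σ j k) * u k + X * e' := by
    intro j
    refine ⟨divX (w1 j - ∑ k, C (σ j k) * u k), ?_⟩
    have := X_mul_divX_add (w1 j - ∑ k, C (σ j k) * u k)
    have h3 : (w1 j - ∑ k, C (σ j k) * u k).coeff 0 = 0 := by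
      simp only [coeff_sub, finsetSum_coeff, mul_coeff_zero, h0, coeff_C_zero, he, sub_self]
    rw [h3, C_0, add_zero] at this
    rw [this]; ring
  choose e' he' using h2
  refine ⟨e', ?_⟩
  have h4 := skew_zero (fun i j => C (σ i j)) (fun i j => by rw [hσ i j, C_neg]) u
  apply mul_left_cancel₀ (X_ne_zero : (X : A[X]) ≠ 0)
  rw [mul_one]
  conv_rhs => rw [← hw]
  simp only [he', add_mul, Finset.sum_add_distrib]
  rw [h4, zero_add, mul_add, Finset.mul_sum, Finset.mul_sum]
  congr 1
  · exact Finset.sum_congr rfl fun i _ => by ring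
  · exact Finset.sum_congr rfl fun i _ => by ring

lemma unim_b (u : Fin r → (MvPolynomial (Fin r) ℤ)[X]) (c : Fin (s+1) → (MvPolynomial (Fin r) ℤ)[X])
    (h0 : ∀ j, (u j).coeff 0 = MvPolynomial.X j)
    (w : Fin r ⊕ Fin (s+1) → (MvPolynomial (Fin r) ℤ)[X])
    (hw : w ⬝ᵥ Sum.elim u ((X : (MvPolynomial (Fin r) ℤ)[X]) • c) = X) :
    ∃ w, w ⬝ᵥ Sum.elim u c = 1 := by
  simp only [dotProduct, Fintype.sum_sum_type, Sum.elim_inl, Sum.elim_inr, Pi.smul_apply, smul_eq_mul] at hw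
  obtain ⟨w1, h⟩ := unim_gen (fun j => MvPolynomial.X j) koszul u c h0 _ _ hw
  refine ⟨Sum.elim w1 fun i => w (.inr i), ?_⟩
  simp only [dotProduct, Fintype.sum_sum_type, Sum.elim_inl, Sum.elim_inr]
  exact h

noncomputable def tv (r s : ℕ) : Fin r ⊕ Fin (s+1) → (MvPolynomial (Fin r) ℤ)[X] :=
  Sum.elim (fun j => C (MvPolynomial.X j)) ((X : (MvPolynomial (Fin r) ℤ)[X]) • Pi.single 0 1)

lemma step_d (c : Fin (s+1) → MvPolynomial (Fin r) ℤ)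
    (hc : ∃ w, w ⬝ᵥ (Sum.elim (fun j => MvPolynomial.X j) c : Fin r ⊕ Fin (s+1) → MvPolynomial (Fin r) ℤ) = 1) :
    VEq (Sum.elim (fun j => C (MvPolynomial.X j)) ((X : (MvPolynomial (Fin r) ℤ)[X]) • fun i => C (c i)))
      (tv r s) := by
  let c0 : Fin (s+1) → ℤ := fun i => MvPolynomial.constantCoeff (c i)
  obtain ⟨w, hw⟩ := hc
  have h1 : ∃ w, w ⬝ᵥ c0 = 1 := by
    refine ⟨fun i => MvPolynomial.constantCoeff (w (.inr i)), ?_⟩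
    have := congrArg MvPolynomial.constantCoeff hw
    simpa [dotProduct, c0] using this
  obtain ⟨D, hD, hv⟩ := (Cpl.of_pid ℤ).gen (0 : Fin (s+1)) c0 h1
  let φ : ℤ →+* (MvPolynomial (Fin r) ℤ)[X] := C.comp MvPolynomial.C
  have h2 : VEq (Pi.single 0 1 : Fin (s+1) → (MvPolynomial (Fin r) ℤ)[X]) (fun i => φ (c0 i)) := by
    refine ⟨D.map φ, by rw [unit_col_map]; exact hD.map _, ?_⟩
    ext1 i
    rw [Matrix.mulVec_single_one, Matrix.col_apply, Matrix.map_apply, hv]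
  refine VEq.symm ?_
  refine (VEq.inr (fun j => C (MvPolynomial.X j)) (h2.smul X)).trans ?_
  let N : Matrix (Fin (s+1)) (Fin r) (MvPolynomial (Fin r) ℤ)[X] := Matrix.of fun i j => X * C (kap (c i) j)
  have := VEq.elem (fun j => C (MvPolynomial.X j)) ((X : (MvPolynomial (Fin r) ℤ)[X]) • fun i => φ (c0 i)) N
  convert this using 2
  ext1 i
  simp only [Pi.smul_apply, Pi.add_apply, Matrix.mulVec, dotProduct, N, Matrix.of_apply, smul_eq_mul]
  have h3 := kap_dot (c i)
  have h4 : c i = MvPolynomial.C (c0 i) + ∑ j, MvPolynomial.X j * kap (c i) j := by rw [h3]; simp [c0]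
  conv_lhs => rw [h4]
  simp only [φ, RingHom.comp_apply, C_add, map_sum, C_mul, mul_add, Finset.mul_sum]
  congr 1
  exact Finset.sum_congr rfl fun j _ => by ring

lemma Tcore (IH : ∀ u : Fin r ⊕ Fin (s+1) → MvPolynomial (Fin r) ℤ,
      Ideal.span (Set.range u) = Ideal.span (Set.range (Sum.elim (fun j => MvPolynomial.X j) 0 : Fin r ⊕ Fin (s+1) → MvPolynomial (Fin r) ℤ)) →
      VEq u (Sum.elim (fun j => MvPolynomial.X j) 0))
    (u : Fin r ⊕ Fin (s+1) → (MvPolynomial (Fin r) ℤ)[X])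
    (h : Ideal.span (Set.range u) = Ideal.span (Set.range (tv r s))) : VEq u (tv r s) := by
  have h1 := span_map (constantCoeff : (MvPolynomial (Fin r) ℤ)[X] →+* _) h
  have h2 : (fun i => constantCoeff (tv r s i)) = Sum.elim (fun j => MvPolynomial.X j) 0 := by
    ext1 x; rcases x with i | i <;> simp [tv]
  rw [h2] at h1
  obtain ⟨E, hE, hEu⟩ := IH _ h1
  let v := (E.map C).mulVec u
  have hv : VEq u v := ⟨E.map C, by rw [unit_col_map]; exact hE.map _, rfl⟩
  have hv0 : ∀ x, (v x).coeff 0 = (Sum.elim (fun j => MvPolynomial.X j) 0 : Fin r ⊕ Fin (s+1) → MvPolynomial (Fin r) ℤ) x := by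
    intro x
    rw [← hEu]
    simp only [v, Matrix.mulVec, dotProduct, finsetSum_coeff, mul_coeff_zero, Matrix.map_apply,
      coeff_C_zero, constantCoeff_apply]
  let a := fun i => v (.inl i)
  let c := fun i => divX (v (.inr i))
  have hva : v = Sum.elim a ((X : (MvPolynomial (Fin r) ℤ)[X]) • c) := by
    ext1 x
    rcases x with i | i
    · simp [a]
    · have := X_mul_divX_add (v (.inr i))
      rw [hv0, Sum.elim_inr, Pi.zero_apply, C_0, add_zero] at this
      simp [c, this]
  have hX : (X : (MvPolynomial (Fin r) ℤ)[X]) ∈ Ideal.span (Set.range v) := by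
    rw [← hv.span, h]
    exact Ideal.subset_span ⟨.inr 0, by simp [tv]⟩
  obtain ⟨w, hw⟩ := mem_span_range hX
  rw [hva] at hw
  have hun := unim_b a c (fun j => by simp [a, hv0]) w hw
  have h5 := conjX' (cplX r) (0 : Fin (s+1)) a c hun
  refine hv.trans ?_
  rw [hva]
  refine h5.symm.trans ?_
  have h6 : (fun i => C ((a i).coeff 0)) = fun j => (C (MvPolynomial.X j) : (MvPolynomial (Fin r) ℤ)[X]) := by
    ext1 j; simp [a, hv0]
  rw [h6]
  apply step_d
  obtain ⟨w, hw⟩ := hun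
  refine ⟨fun i => (w i).coeff 0, ?_⟩
  have := congrArg (fun p => coeff p 0) hw
  simpa [dotProduct, finsetSum_coeff, mul_coeff_zero, a, hv0] using this

end

open MvPolynomial in
theorem T : ∀ r s : ℕ, ∀ u : Fin r ⊕ Fin s → MvPolynomial (Fin r) ℤ,
      Ideal.span (Set.range u) = Ideal.span (Set.range (Sum.elim (fun j => X j) 0 : Fin r ⊕ Fin s → MvPolynomial (Fin r) ℤ)) →
      VEq u (Sum.elim (fun j => X j) 0) := by
  intro r
  induction r with
  | zero =>
    intro s u h
    have : u = (Sum.elim (fun j => X j) 0) := by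
      ext1 x
      have hx : u x ∈ Ideal.span (Set.range u) := Ideal.subset_span ⟨x, rfl⟩
      rw [h] at hx
      have h0 : Ideal.span (Set.range (Sum.elim (fun j => X j) 0 : Fin 0 ⊕ Fin s → MvPolynomial (Fin 0) ℤ)) = ⊥ := by
        rw [Ideal.span_eq_bot]
        rintro _ ⟨x | x, rfl⟩
        · exact x.elim0
        · rfl
      rw [h0, Ideal.mem_bot] at hx
      rw [hx]
      rcases x with x | x
      · exact x.elim0
      · rfl
    rw [this]; exact VEq.refl _
  | succ r IH =>
    intro s u h
    let e : Fin r ⊕ Fin (s+1) ≃ Fin (r+1) ⊕ Fin s :=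
      { toFun := Sum.elim (fun j => .inl j.succ) (Fin.cases (.inl 0) (fun i => .inr i))
        invFun := Sum.elim (Fin.cases (.inr 0) fun j => .inl j) (fun i => .inr i.succ)
        left_inv := by
          rintro (j | i)
          · simp
          · induction i using Fin.cases <;> simp
        right_inv := by
          rintro (j | i)
          · induction j using Fin.cases <;> simp
          · simp }
    let F := finSuccEquiv ℤ r
    apply VEq.reindex e
    have ht : ∀ x, F ((Sum.elim (fun j => X j) 0 : Fin (r+1) ⊕ Fin s → MvPolynomial (Fin (r+1)) ℤ) (e x)) = tv r s x := by
      rintro (j | i)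
      · simp [e, F, tv, finSuccEquiv_X_succ]
      · induction i using Fin.cases with
        | zero => simp [e, F, tv, finSuccEquiv_X_zero]
        | succ i => simp [e, F, tv]
    have h1 := span_map (F : MvPolynomial (Fin (r+1)) ℤ →+* Polynomial (MvPolynomial (Fin r) ℤ)) h
    have h2 : VEq (fun x => F (u (e x))) (tv r s) := by
      apply Tcore (IH (s+1))
      rw [show (tv r s) = _ from (funext ht).symm]
      have hr : ∀ v : Fin (r+1) ⊕ Fin s → MvPolynomial (Fin (r+1)) ℤ, Set.range (fun x => F (v (e x))) = Set.range (fun x => F (v x)) :=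
        fun v => e.surjective.range_comp (fun x => F (v x))
      rw [hr, hr]
      exact h1
    have h3 := h2.map (F.symm : Polynomial (MvPolynomial (Fin r) ℤ) →+* MvPolynomial (Fin (r+1)) ℤ)
    convert h3 using 1
    · ext1 x; simp
    · ext1 x; rw [← ht]; simp
end FML

namespace FML

lemma cplMat {R : Type} [CommRing R] (hR : Cpl R) : ∀ (k : ℕ) (κ : Type) [Fintype κ] [DecidableEq κ]
    (J K : Fin k → (Fin k ⊕ κ) → R), (∀ i j, J i ⬝ᵥ K j = if i = j then 1 else 0) →
    ∃ D : Matrix (Fin k ⊕ κ) (Fin k ⊕ κ) R, IsUnit D.det ∧ ∀ i, D (.inl i) = J i := by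
  intro k
  induction k with
  | zero => exact fun κ _ _ J K _ => ⟨1, by simp, fun i => i.elim0⟩
  | succ k IH =>
    intro κ _ _ J K h
    let e : Fin k ⊕ Option κ ≃ Fin (k+1) ⊕ κ :=
      { toFun := Sum.elim (fun j => .inl j.succ) (fun o => o.elim (.inl 0) (fun i => .inr i))
        invFun := Sum.elim (Fin.cases (.inr none) fun j => .inl j) (fun i => .inr (some i))
        left_inv := by
          rintro (j | i)
          · simp
          · cases i <;> simp
        right_inv := by
          rintro (j | i)
          · induction j using Fin.cases <;> simp
          · simp }
    have hdot : ∀ a b : Fin (k+1) ⊕ κ → R, (a ∘ e) ⬝ᵥ (b ∘ e) = a ⬝ᵥ b := fun a b =>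
      e.sum_comp (fun x => a x * b x)
    obtain ⟨D, hD, hDJ⟩ := IH (Option κ) (fun i => J i.succ ∘ e) (fun i => K i.succ ∘ e) (by
      intro i j; rw [hdot, h]; simp)
    let y := Matrix.vecMul (J 0 ∘ e) D⁻¹
    let z := D.mulVec (K 0 ∘ e)
    have hy : Matrix.vecMul y D = J 0 ∘ e := by
      rw [Matrix.vecMul_vecMul, Matrix.nonsing_inv_mul _ hD, Matrix.vecMul_one]
    have hyz : y ⬝ᵥ z = 1 := by
      rw [Matrix.dotProduct_mulVec, hy, hdot, h]; simp
    have hz : ∀ i, z (.inl i) = 0 := by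
      intro i
      change D (.inl i) ⬝ᵥ _ = 0
      rw [hDJ, hdot, h]; simp
    obtain ⟨G, hG, hGy⟩ := hR.gen (none : Option κ) (fun x => y (.inr x)) ⟨fun x => z (.inr x), by
      rw [dotProduct_comm, ← hyz]
      simp only [dotProduct, Fintype.sum_sum_type, hz]; simp⟩
    let N : Matrix (Option κ) (Fin k) R := Matrix.of fun o j => if o = none then y (.inl j) else 0
    let D2 := Matrix.fromBlocks (1 : Matrix (Fin k) (Fin k) R) 0 N G.transpose
    have hD2 : IsUnit D2.det := by
      simpa [D2, Matrix.det_fromBlocks_zero₁₂, Matrix.det_transpose] using hG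
    have h1 : ∀ x, (D2 * D) x = Matrix.vecMul (D2 x) D := fun x => rfl
    have h2 : D2 (.inr none) = y := by
      ext x; rcases x with x | x
      · simp [D2, N]
      · simp [D2, hGy]
    have h3 : ∀ i, D2 (.inl i) = Pi.single (.inl i) 1 := by
      intro i
      ext x; rcases x with x | x
      · simp [D2, Matrix.one_apply, Pi.single_apply, eq_comm]
      · simp [D2]
    refine ⟨Matrix.reindex e e (D2 * D), ?_, ?_⟩
    · rw [Matrix.det_reindex_self, Matrix.det_mul]; exact hD2.mul hD
    · intro i
      ext x
      obtain ⟨x, rfl⟩ := e.surjective x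
      induction i using Fin.cases with
      | zero =>
        have : e.symm (.inl 0) = .inr none := rfl
        simp only [Matrix.reindex_apply, Matrix.submatrix_apply, this, Equiv.symm_apply_apply, h1, h2, hy]
        rfl
      | succ i =>
        have : e.symm (.inl i.succ) = .inl i := rfl
        simp only [Matrix.reindex_apply, Matrix.submatrix_apply, this, Equiv.symm_apply_apply, h1, h3]
        rw [Matrix.single_one_vecMul]
        change D (.inl i) x = _
        rw [hDJ]; rfl

open MvPolynomial

section
variable {k m : ℕ}

lemma qsSum : Cpl (MvPolynomial (Fin k ⊕ Fin m) ℤ) :=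
  (qs (k+m) ℤ).of_equiv (renameEquiv ℤ finSumFinEquiv.symm).toRingEquiv

noncomputable def piK : MvPolynomial (Fin k ⊕ Fin m) ℤ →ₐ[ℤ] MvPolynomial (Fin m) ℤ :=
  aeval (Sum.elim 0 X)

lemma piK_ker (p : MvPolynomial (Fin k ⊕ Fin m) ℤ) (hp : piK p = 0) :
    ∃ w : Fin k → MvPolynomial (Fin k ⊕ Fin m) ℤ, w ⬝ᵥ (fun i => X (.inl i)) = p := by
  apply mem_span_range
  set I := Ideal.span (Set.range fun i : Fin k => (X (.inl i) : MvPolynomial (Fin k ⊕ Fin m) ℤ)) with hI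
  have h : ((Ideal.Quotient.mkₐ ℤ I).comp ((rename Sum.inr).comp piK)) = Ideal.Quotient.mkₐ ℤ I := by
    apply algHom_ext
    rintro (i | i)
    · simp [piK]
      symm
      rw [Ideal.Quotient.eq_zero_iff_mem]
      exact Ideal.subset_span ⟨i, rfl⟩
    · simp [piK]
  have := DFunLike.congr_fun h p
  simp only [AlgHom.comp_apply, hp, map_zero] at this
  exact Ideal.Quotient.eq_zero_iff_mem.1 this.symm

lemma CAcore (J : Fin k → (Fin k ⊕ Fin m) → MvPolynomial (Fin k ⊕ Fin m) ℤ)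
    (K : Fin k → (Fin k ⊕ Fin m) → MvPolynomial (Fin k ⊕ Fin m) ℤ)
    (h : ∀ i j, J i ⬝ᵥ K j = if i = j then 1 else 0) (hJ : ∀ i, J i ⬝ᵥ X = X (.inl i)) :
    ∃ D : Matrix (Fin k ⊕ Fin m) (Fin k ⊕ Fin m) (MvPolynomial (Fin k ⊕ Fin m) ℤ),
      IsUnit D.det ∧ D.mulVec X = X ∧ ∀ i, D (.inl i) = J i := by
  obtain ⟨D, hD, hDJ⟩ := cplMat qsSum k (Fin m) J K h
  let u := D.mulVec X
  have hu : ∀ i, u (.inl i) = X (.inl i) := by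
    intro i; change D (.inl i) ⬝ᵥ X = _; rw [hDJ, hJ]
  let u2 : Fin m → MvPolynomial (Fin k ⊕ Fin m) ℤ := fun i => u (.inr i)
  have hs := span_map (piK (k := k) (m := m)).toRingHom (VEq.span ⟨D, hD, rfl⟩ : Ideal.span (Set.range X) = Ideal.span (Set.range u))
  let v : Fin m → MvPolynomial (Fin m) ℤ := fun i => piK (u2 i)
  have hv : VEq v X := by
    apply VEq.reindex (Equiv.sumEmpty (Fin m) (Fin 0))
    have e1 : (X ∘ (Equiv.sumEmpty (Fin m) (Fin 0))) = (Sum.elim (fun j => X j) 0 : _ → MvPolynomial (Fin m) ℤ) := by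
      ext1 x; rcases x with x | x
      · rfl
      · exact x.elim0
    rw [e1]
    apply T
    rw [← e1, (Equiv.sumEmpty (Fin m) (Fin 0)).surjective.range_comp,
      (Equiv.sumEmpty (Fin m) (Fin 0)).surjective.range_comp]
    apply le_antisymm
    · rw [Ideal.span_le]
      rintro _ ⟨i, rfl⟩
      have : v i ∈ Ideal.span (Set.range fun i => (piK (k := k) (m := m)).toRingHom (u i)) :=
        Ideal.subset_span ⟨.inr i, rfl⟩
      rw [← hs] at this
      refine Ideal.span_le.2 ?_ this
      rintro _ ⟨x | x, rfl⟩
      · simp [piK]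
      · exact Ideal.subset_span ⟨x, by simp [piK]⟩
    · rw [Ideal.span_le]
      rintro _ ⟨i, rfl⟩
      have : X i ∈ Ideal.span (Set.range fun i => (piK (k := k) (m := m)).toRingHom (X i)) :=
        Ideal.subset_span ⟨.inr i, by simp [piK]⟩
      rw [hs] at this
      refine Ideal.span_le.2 ?_ this
      rintro _ ⟨x | x, rfl⟩
      · simp [piK, hu]
      · exact Ideal.subset_span ⟨x, rfl⟩
  obtain ⟨E, hE, hEv⟩ := hv
  let ρ : MvPolynomial (Fin m) ℤ →+* MvPolynomial (Fin k ⊕ Fin m) ℤ := (rename Sum.inr : _ →ₐ[ℤ] MvPolynomial (Fin k ⊕ Fin m) ℤ).toRingHom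
  have hpr : ∀ p, piK (k := k) (ρ p) = p := by
    intro p
    have : (piK (k := k) (m := m)).comp (rename Sum.inr) = AlgHom.id ℤ _ := by
      apply algHom_ext; intro i; simp [piK]
    exact DFunLike.congr_fun this p
  have hN : ∀ i, ∃ w : Fin k → MvPolynomial (Fin k ⊕ Fin m) ℤ,
      w ⬝ᵥ (fun i => X (.inl i)) = X (.inr i) - (E.map ρ).mulVec u2 i := by
    intro i
    apply piK_ker
    have h1 := congrFun hEv i
    simp only [Matrix.mulVec, dotProduct] at h1 ⊢
    simp only [map_sub, map_sum, map_mul, Matrix.map_apply, hpr]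
    rw [h1]
    simp [piK]
  choose N hN using hN
  let G := Matrix.fromBlocks (1 : Matrix (Fin k) (Fin k) _) 0 (Matrix.of N) (E.map ρ)
  have hGdet : IsUnit G.det := by
    simp only [G, Matrix.det_fromBlocks_zero₁₂, Matrix.det_one, one_mul]
    rw [unit_col_map (S := MvPolynomial (Fin k ⊕ Fin m) ℤ)]; exact hE.map _
  refine ⟨G * D, by rw [Matrix.det_mul]; exact hGdet.mul hD, ?_, ?_⟩
  · rw [← Matrix.mulVec_mulVec]
    change G.mulVec u = X
    have hue : u = Sum.elim (fun i => X (.inl i)) u2 := by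
      ext1 x; rcases x with x | x
      · exact hu x
      · rfl
    rw [hue, Matrix.fromBlocks_mulVec]
    ext1 x
    rcases x with i | i
    · simp
    · have := hN i
      simp only [Sum.elim_inr, Pi.add_apply, Sum.elim_comp_inl, Sum.elim_comp_inr]
      have h2 : ((Matrix.of N).mulVec fun i => X (.inl i)) i = N i ⬝ᵥ (fun i => X (.inl i)) := rfl
      rw [h2, this]; ring
  · intro i
    have h1 : (G * D) (.inl i) = Matrix.vecMul (G (.inl i)) D := rfl
    have h3 : G (.inl i) = Pi.single (.inl i) 1 := by
      ext1 x; rcases x with x | x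
      · simp [G, Matrix.one_apply, Pi.single_apply, eq_comm]
      · simp [G]
    rw [h1, h3, Matrix.single_one_vecMul, ← hDJ]
    rfl
end

end FML

namespace FML
open MvPolynomial

section
variable {ι : Type} [Fintype ι] [DecidableEq ι]

/-- linear substitution `X i ↦ ∑ j, A i j X j` -/
noncomputable def sub (A : Matrix ι ι ℤ) : MvPolynomial ι ℤ →ₐ[ℤ] MvPolynomial ι ℤ :=
  aeval fun i => ∑ j, C (A i j) * X j

lemma sub_X (A : Matrix ι ι ℤ) (i : ι) : sub A (X i) = (A.map C).mulVec X i := by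
  simp [sub, Matrix.mulVec, dotProduct]

lemma sub_sub (A B : Matrix ι ι ℤ) (h : B * A = 1) (p : MvPolynomial ι ℤ) : sub A (sub B p) = p := by
  have : (sub A).comp (sub B) = AlgHom.id ℤ _ := by
    apply algHom_ext
    intro i
    simp only [AlgHom.comp_apply, AlgHom.id_apply, sub_X, Matrix.mulVec, dotProduct, map_sum, map_mul,
      Matrix.map_apply, algHom_C, Finset.mul_sum]
    rw [Finset.sum_comm]
    have : ∀ y, ∑ x, (C (B i x) * (C (A x y) * X y) : MvPolynomial ι ℤ) = C ((B * A) i y) * X y := by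
      intro y
      rw [Matrix.mul_apply, map_sum, Finset.sum_mul]
      exact Finset.sum_congr rfl fun x _ => by rw [map_mul]; ring
    simp only [algebraMap_eq, this, h, Matrix.one_apply]
    simp
  exact DFunLike.congr_fun this p

lemma lin_coeff (f : ι → MvPolynomial ι ℤ) (l : ι → ℤ) (h : f ⬝ᵥ X = (fun j => C (l j)) ⬝ᵥ X) (j : ι) :
    constantCoeff (f j) = l j := by
  have := congrArg (fun p => constantCoeff (pderiv j p)) h
  simp [dotProduct, pderiv_X, Pi.single_apply, apply_ite] at this
  exact this
end

variable {k m : ℕ}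

lemma CAsum (J K : Fin k → (Fin k ⊕ Fin m) → MvPolynomial (Fin k ⊕ Fin m) ℤ)
    (h : ∀ i j, J i ⬝ᵥ K j = if i = j then 1 else 0) (L : Fin k → (Fin k ⊕ Fin m) → ℤ)
    (hJ : ∀ i, J i ⬝ᵥ X = (fun j => C (L i j)) ⬝ᵥ X) :
    ∃ (D : Matrix (Fin k ⊕ Fin m) (Fin k ⊕ Fin m) (MvPolynomial (Fin k ⊕ Fin m) ℤ))
      (A : Matrix (Fin k ⊕ Fin m) (Fin k ⊕ Fin m) ℤ),
      IsUnit D.det ∧ IsUnit A.det ∧ D.mulVec X = (A.map C).mulVec X ∧ (∀ i, D (.inl i) = J i) ∧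
      ∀ i, A (.inl i) = L i := by
  obtain ⟨A, hA, hAL⟩ := cplMat (Cpl.of_pid ℤ) k (Fin m) L (fun i j => constantCoeff (K i j)) (by
    intro i j
    have h1 := congrArg constantCoeff (h i j)
    simp only [dotProduct, map_sum, map_mul, lin_coeff (J i) (L i) (hJ i)] at h1
    rw [dotProduct, h1]; split_ifs <;> simp)
  have hAi : A * A⁻¹ = 1 := Matrix.mul_nonsing_inv _ hA
  have hiA : A⁻¹ * A = 1 := Matrix.nonsing_inv_mul _ hA
  let CA : Matrix (Fin k ⊕ Fin m) (Fin k ⊕ Fin m) (MvPolynomial (Fin k ⊕ Fin m) ℤ) := A.map C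
  let CB : Matrix (Fin k ⊕ Fin m) (Fin k ⊕ Fin m) (MvPolynomial (Fin k ⊕ Fin m) ℤ) := A⁻¹.map C
  have hAB : CA * CB = 1 := by
    have : (A * A⁻¹).map C = CA * CB := Matrix.map_mul
    rw [← this, hAi]; simp
  have hBA : CB * CA = 1 := by
    have : (A⁻¹ * A).map C = CB * CA := Matrix.map_mul
    rw [← this, hiA]; simp
  let J' : Fin k → (Fin k ⊕ Fin m) → MvPolynomial (Fin k ⊕ Fin m) ℤ :=
    fun i => Matrix.vecMul (fun j => sub A⁻¹ (J i j)) CB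
  let K' : Fin k → (Fin k ⊕ Fin m) → MvPolynomial (Fin k ⊕ Fin m) ℤ :=
    fun i => CA.mulVec (fun j => sub A⁻¹ (K i j))
  have hsd : ∀ (B : Matrix (Fin k ⊕ Fin m) (Fin k ⊕ Fin m) ℤ) (f g : (Fin k ⊕ Fin m) → MvPolynomial (Fin k ⊕ Fin m) ℤ),
      (fun j => sub B (f j)) ⬝ᵥ (fun j => sub B (g j)) = sub B (f ⬝ᵥ g) := by
    intro B f g; simp [dotProduct]
  have hXs : ∀ B : Matrix (Fin k ⊕ Fin m) (Fin k ⊕ Fin m) ℤ, (fun j => sub B (X j)) = (B.map C).mulVec X :=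
    fun B => funext (sub_X B)
  obtain ⟨D, hD, hDX, hDJ⟩ := CAcore J' K' (by
    intro i j
    rw [Matrix.dotProduct_mulVec, Matrix.vecMul_vecMul, hBA, Matrix.vecMul_one, hsd, h]
    split_ifs <;> simp) (by
    intro i
    rw [← Matrix.dotProduct_mulVec]
    rw [← hXs A⁻¹, hsd, hJ, ← hsd, hXs]
    have : (fun j => sub A⁻¹ (C (L i j))) = CA (.inl i) := by
      ext1 j; simp [CA, hAL, algebraMap_eq]
    rw [this]
    have h2 : CA (.inl i) ⬝ᵥ CB.mulVec X = (CA.mulVec (CB.mulVec X)) (.inl i) := rfl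
    rw [h2, Matrix.mulVec_mulVec, hAB, Matrix.one_mulVec])
  let D' := D.map (sub A)
  refine ⟨D' * CA, A, ?_, hA, ?_, ?_, hAL⟩
  · rw [Matrix.det_mul]
    refine IsUnit.mul ?_ ?_
    · have := unit_col_map (sub A).toRingHom D
      change (D'.det) = _ at this
      rw [this]; exact hD.map _
    · have : CA.det = _ := unit_col_map (C : ℤ →+* MvPolynomial (Fin k ⊕ Fin m) ℤ) A
      rw [this]; exact hA.map _
  · rw [← Matrix.mulVec_mulVec]
    change D'.mulVec (CA.mulVec X) = CA.mulVec X
    rw [← hXs A]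
    ext1 i
    have h1 : D'.mulVec (fun j => sub A (X j)) i = sub A (D.mulVec X i) := hsd A (D i) X
    rw [h1, hDX]
  · intro i
    have h1 : (D' * CA) (.inl i) = Matrix.vecMul (fun j => sub A (D (.inl i) j)) CA := rfl
    rw [h1, hDJ]
    have h2 : (fun j => sub A (J' i j)) = Matrix.vecMul (J i) CB := by
      ext1 j
      simp only [J', Matrix.vecMul, dotProduct, map_sum, map_mul, sub_sub A A⁻¹ hiA]
      refine Finset.sum_congr rfl fun x _ => ?_
      simp [CB, algebraMap_eq]
    rw [h2, Matrix.vecMul_vecMul, hBA, Matrix.vecMul_one]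

theorem CA (J K : Fin k → Fin (k + m) → MvPolynomial (Fin (k + m)) ℤ)
    (h : ∀ i j, J i ⬝ᵥ K j = if i = j then 1 else 0) (L : Fin k → Fin (k + m) → ℤ)
    (hJ : ∀ i, J i ⬝ᵥ X = (fun j => C (L i j)) ⬝ᵥ X) :
    ∃ (D : Matrix (Fin (k + m)) (Fin (k + m)) (MvPolynomial (Fin (k + m)) ℤ))
      (A : Matrix (Fin (k + m)) (Fin (k + m)) ℤ),
      IsUnit D.det ∧ IsUnit A.det ∧ D.mulVec X = (A.map C).mulVec X ∧ (∀ i, D (Fin.castAdd m i) = J i) ∧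
      ∀ i, A (Fin.castAdd m i) = L i := by
  let e : Fin k ⊕ Fin m ≃ Fin (k + m) := finSumFinEquiv
  let F : MvPolynomial (Fin (k + m)) ℤ ≃ₐ[ℤ] MvPolynomial (Fin k ⊕ Fin m) ℤ := renameEquiv ℤ e.symm
  have hFX : ∀ x, F (X (e x)) = X x := by intro x; simp [F]
  have hFX' : ∀ x, F.symm (X x) = X (e x) := by intro x; rw [← hFX]; simp
  have hFC : ∀ a, F (C a) = C a := fun a => F.commutes a
  have hFC' : ∀ a, F.symm (C a) = C a := fun a => F.symm.commutes a
  have hdot : ∀ a b : Fin (k + m) → MvPolynomial (Fin (k + m)) ℤ,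
      (fun x => F (a (e x))) ⬝ᵥ (fun x => F (b (e x))) = F (a ⬝ᵥ b) := by
    intro a b
    simp only [dotProduct, map_sum, map_mul]
    exact e.sum_comp (fun x => F (a x) * F (b x))
  obtain ⟨D, A, hD, hA, hDA, hDJ, hAL⟩ := CAsum (fun i x => F (J i (e x))) (fun i x => F (K i (e x)))
    (by intro i j; rw [hdot, h]; split_ifs <;> simp) (fun i x => L i (e x)) (by
      intro i
      have h1 := hdot (J i) X
      have h2 := hdot (fun j => C (L i j)) X
      simp only [hFX, hFC] at h1 h2
      have e1 : (fun x : Fin k ⊕ Fin m => (X x : MvPolynomial (Fin k ⊕ Fin m) ℤ)) = X := rfl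
      rw [e1] at h1 h2
      rw [h1, h2, hJ])
  refine ⟨Matrix.reindex e e (D.map F.symm), Matrix.reindex e e A, ?_, ?_, ?_, ?_, ?_⟩
  · rw [Matrix.det_reindex_self]
    have := unit_col_map F.symm.toAlgHom.toRingHom D
    change (D.map F.symm).det = _ at this
    rw [this]; exact hD.map _
  · rwa [Matrix.det_reindex_self]
  · ext1 y
    have := congrArg F.symm (congrFun hDA (e.symm y))
    simp only [Matrix.mulVec, dotProduct, map_sum, map_mul, hFX', Matrix.map_apply, hFC'] at this
    simp only [Matrix.mulVec, dotProduct, Matrix.reindex_apply, Matrix.submatrix_apply, Matrix.map_apply]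
    rw [← e.sum_comp, ← e.sum_comp]
    simpa using this
  · intro i
    ext1 y
    have h1 : e.symm (Fin.castAdd m i) = .inl i := by simp [e]
    simp [h1, hDJ]
  · intro i
    ext1 y
    have h1 : e.symm (Fin.castAdd m i) = .inl i := by simp [e]
    simp [h1, hAL]

end FML

namespace FML
set_option linter.unusedSectionVars false

section
variable {n : ℕ}

def Metab (A : Type) [LieRing A] : Prop := ∀ a b c d : A, ⁅⁅a, b⁆, ⁅c, d⁆⁆ = 0

lemma der2_mem (a b c d : FreeLieAlgebra ℤ (Fin n)) :
    ⁅⁅a, b⁆, ⁅c, d⁆⁆ ∈ LieAlgebra.derivedSeries ℤ (FreeLieAlgebra ℤ (Fin n)) 2 := by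
  rw [LieAlgebra.derivedSeries_def, LieAlgebra.derivedSeriesOfIdeal_succ, LieAlgebra.derivedSeriesOfIdeal_succ,
    LieAlgebra.derivedSeriesOfIdeal_zero]
  exact LieSubmodule.lie_mem_lie (LieSubmodule.lie_mem_lie trivial trivial) (LieSubmodule.lie_mem_lie trivial trivial)

lemma mkM_surj : Function.Surjective (mkM n) := LieSubmodule.Quotient.surjective_mk' _

lemma mkM_lie (a b : FreeLieAlgebra ℤ (Fin n)) : mkM n ⁅a, b⁆ = ⁅mkM n a, mkM n b⁆ := rfl
lemma mkM_add (a b : FreeLieAlgebra ℤ (Fin n)) : mkM n (a + b) = mkM n a + mkM n b := rfl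

lemma M_metab : Metab (M n) := by
  intro a b c d
  obtain ⟨a, rfl⟩ := mkM_surj a
  obtain ⟨b, rfl⟩ := mkM_surj b
  obtain ⟨c, rfl⟩ := mkM_surj c
  obtain ⟨d, rfl⟩ := mkM_surj d
  rw [← mkM_lie, ← mkM_lie, ← mkM_lie]
  exact (LieSubmodule.Quotient.mk_eq_zero _).2 (der2_mem a b c d)

lemma inst_eq {A : Type} [LieRing A] (i : LieAlgebra ℤ A) : i = LieRing.instLieAlgebra := by
  have h : ∀ j : LieAlgebra ℤ A, i.toModule = j.toModule → i = j := by
    intro j h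
    cases i; cases j; congr
  exact h _ (Subsingleton.elim _ _)

variable {A : Type} [LieRing A] [inst : LieAlgebra ℤ A]

lemma lift_ker (hA : Metab A) (f : Fin n → A) (z : FreeLieAlgebra ℤ (Fin n))
    (hz : z ∈ LieAlgebra.derivedSeries ℤ (FreeLieAlgebra ℤ (Fin n)) 2) : FreeLieAlgebra.lift ℤ f z = 0 := by
  obtain rfl := inst_eq inst
  have h0 : LieAlgebra.derivedSeries ℤ A 2 = ⊥ := by
    rw [LieAlgebra.derivedSeries_def, LieAlgebra.derivedSeriesOfIdeal_succ, LieAlgebra.derivedSeriesOfIdeal_succ,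
      LieAlgebra.derivedSeriesOfIdeal_zero, LieSubmodule.lie_eq_bot_iff]
    intro x hx m hm
    rw [← LieSubmodule.mem_toSubmodule, LieSubmodule.lieIdeal_oper_eq_linear_span'] at hx hm
    induction hx using Submodule.span_induction with
    | zero => simp
    | add a b _ _ ha hb => rw [add_lie, ha, hb, add_zero]
    | smul t a _ ha => rw [smul_lie, ha, smul_zero]
    | mem x hx =>
      obtain ⟨a, _, b, _, rfl⟩ := hx
      induction hm using Submodule.span_induction with
      | zero => simp
      | add a b _ _ ha hb => rw [lie_add, ha, hb, add_zero]
      | smul t a _ ha => rw [lie_smul, ha, smul_zero]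
      | mem x hx =>
        obtain ⟨c, _, d, _, rfl⟩ := hx
        exact hA a b c d
  have := LieIdeal.derivedSeries_map_le (f := FreeLieAlgebra.lift ℤ f) 2
  rw [h0] at this
  have h2 := this (LieIdeal.mem_map hz)
  simpa using h2

noncomputable def liftM (hA : Metab A) (f : Fin n → A) : M n →ₗ⁅ℤ⁆ A :=
  let φ : M n →+ A := QuotientAddGroup.lift _ (FreeLieAlgebra.lift ℤ f : FreeLieAlgebra ℤ (Fin n) →ₗ⁅ℤ⁆ A).toLinearMap.toAddMonoidHom
    (fun z hz => lift_ker hA f z hz)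
  { toFun := φ
    map_add' := φ.map_add
    map_smul' := fun c x => by
      obtain rfl := inst_eq inst
      exact map_zsmul φ c x
    map_lie' := by
      intro x y
      obtain ⟨x, rfl⟩ := mkM_surj x
      obtain ⟨y, rfl⟩ := mkM_surj y
      exact LieHom.map_lie (FreeLieAlgebra.lift ℤ f) x y }

lemma liftM_mk (hA : Metab A) (f : Fin n → A) (z : FreeLieAlgebra ℤ (Fin n)) :
    liftM hA f (mkM n z) = FreeLieAlgebra.lift ℤ f z := rfl

noncomputable def xM (i : Fin n) : M n := mkM n (FreeLieAlgebra.of ℤ i)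

lemma liftM_x (hA : Metab A) (f : Fin n → A) (i : Fin n) : liftM hA f (xM i) = f i := by
  rw [xM, liftM_mk, FreeLieAlgebra.lift_of_apply]

noncomputable def mkHom : FreeLieAlgebra ℤ (Fin n) →ₗ⁅ℤ⁆ M n :=
  { toFun := mkM n
    map_add' := mkM_add
    map_smul' := fun _ _ => rfl
    map_lie' := fun {x y} => mkM_lie x y }

lemma hom_ext {φ ψ : M n →ₗ⁅ℤ⁆ A} (h : ∀ i, φ (xM i) = ψ (xM i)) : φ = ψ := by
  have : φ.comp mkHom = ψ.comp mkHom := FreeLieAlgebra.hom_ext h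
  ext z
  obtain ⟨z, rfl⟩ := mkM_surj z
  exact DFunLike.congr_fun this z

lemma M_sub (S : LieSubalgebra ℤ (M n)) (h : ∀ i, xM i ∈ S) (z : M n) : z ∈ S := by
  have hS : Metab S := by
    intro a b c d
    apply Subtype.ext
    exact M_metab (a : M n) b c d
  let φ : M n →ₗ⁅ℤ⁆ S := liftM hS fun i => ⟨xM i, h i⟩
  have : S.incl.comp φ = LieHom.id := hom_ext (fun i => by
    simp only [LieHom.comp_apply, φ, liftM_x]; rfl)
  have h2 := DFunLike.congr_fun this z
  have h3 : ((φ z : S) : M n) = z := h2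
  rw [← h3]; exact (φ z).2

lemma M_ind (N : AddSubgroup (M n)) (h : ∀ i, xM i ∈ N) (had : ∀ i, ∀ z ∈ N, ⁅(xM i : M n), z⁆ ∈ N) (z : M n) : z ∈ N := by
  let S1 : LieSubalgebra ℤ (M n) :=
    { carrier := {y | ∀ z ∈ N, ⁅y, z⁆ ∈ N}
      add_mem' := fun {a b} ha hb z hz => by rw [add_lie]; exact N.add_mem (ha z hz) (hb z hz)
      zero_mem' := fun z hz => by rw [zero_lie]; exact N.zero_mem
      smul_mem' := fun c a ha z hz => by rw [smul_lie]; exact N.zsmul_mem (ha z hz) c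
      lie_mem' := fun {a b} ha hb z hz => by
        rw [lie_lie]; exact N.sub_mem (ha _ (hb z hz)) (hb _ (ha z hz)) }
  have h1 : ∀ y, y ∈ S1 := M_sub S1 had
  let S2 : LieSubalgebra ℤ (M n) :=
    { carrier := N
      add_mem' := fun {a b} ha hb => N.add_mem ha hb
      zero_mem' := N.zero_mem
      smul_mem' := fun c a ha => N.zsmul_mem ha c
      lie_mem' := fun {a b} ha hb => h1 a b hb }
  exact M_sub S2 h z
end

section
variable {A S V : Type} [AddCommGroup A] [CommRing S] [AddCommGroup V] [Module S V]

/-- metabelian Lie ring attached to `α : A → S` and a module `V` -/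
def W (_α : A →+ S) (V : Type) : Type := A × V

variable {α : A →+ S}
instance : AddCommGroup (W α V) := inferInstanceAs (AddCommGroup (A × V))

def W.mk (α : A →+ S) (a : A) (v : V) : W α V := (a, v)

@[ext] lemma W.ext {x y : W α V} (h1 : x.1 = y.1) (h2 : x.2 = y.2) : x = y := Prod.ext h1 h2
lemma W.add_fst (x y : W α V) : (x + y).1 = x.1 + y.1 := rfl
lemma W.add_snd (x y : W α V) : (x + y).2 = x.2 + y.2 := rfl
lemma W.zero_fst : (0 : W α V).1 = 0 := rfl
lemma W.zero_snd : (0 : W α V).2 = 0 := rfl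

instance : Bracket (W α V) (W α V) := ⟨fun x y => W.mk α 0 (α x.1 • y.2 - α y.1 • x.2)⟩
lemma W.lie_fst (x y : W α V) : ⁅x, y⁆.1 = 0 := rfl
lemma W.lie_snd (x y : W α V) : ⁅x, y⁆.2 = α x.1 • y.2 - α y.1 • x.2 := rfl

instance : LieRing (W α V) where
  add_lie x y z := by
    ext
    · simp [W.lie_fst, W.add_fst]
    · simp only [W.lie_snd, W.add_fst, W.add_snd, map_add, add_smul, smul_add]; abel
  lie_add x y z := by
    ext
    · simp [W.lie_fst, W.add_fst]
    · simp only [W.lie_snd, W.add_fst, W.add_snd, map_add, add_smul, smul_add]; abel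
  lie_self x := by
    ext
    · simp [W.lie_fst, W.zero_fst]
    · simp [W.lie_snd, W.zero_snd]
  leibniz_lie x y z := by
    ext
    · simp [W.lie_fst, W.add_fst]
    · simp only [W.lie_snd, W.add_fst, W.add_snd, W.lie_fst, map_zero, zero_smul, sub_zero, zero_sub, smul_sub, smul_smul]
      rw [mul_comm (α y.1) (α x.1), mul_comm (α z.1) (α x.1), mul_comm (α z.1) (α y.1)]
      abel

lemma W.metab : Metab (W α V) := by
  intro a b c d
  ext
  · rfl
  · rw [W.lie_snd, W.lie_fst, W.lie_fst, map_zero, zero_smul, zero_smul, sub_zero]; rfl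
end

end FML

namespace FML
set_option linter.unusedSectionVars false
open MvPolynomial
section
variable {n : ℕ}

lemma exists_action {V : Type} [AddCommGroup V] (T : Fin n → Module.End ℤ V)
    (hc : ∀ i j, T i * T j = T j * T i) :
    ∃ φ : MvPolynomial (Fin n) ℤ →+* Module.End ℤ V, ∀ i, φ (X i) = T i := by
  letI : CommRing (Algebra.adjoin ℤ (Set.range T)) := Algebra.adjoinCommRingOfComm ℤ (by
    rintro _ ⟨i, rfl⟩ _ ⟨j, rfl⟩; exact hc i j)
  let ψ : MvPolynomial (Fin n) ℤ →+* Algebra.adjoin ℤ (Set.range T) :=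
    eval₂Hom (Int.castRingHom _) (fun i => ⟨T i, Algebra.subset_adjoin ⟨i, rfl⟩⟩)
  let ι : Algebra.adjoin ℤ (Set.range T) →+* Module.End ℤ V :=
    { toFun := Subtype.val, map_one' := rfl, map_mul' := fun _ _ => rfl, map_zero' := rfl, map_add' := fun _ _ => rfl }
  refine ⟨ι.comp ψ, fun i => ?_⟩
  simp [ψ, ι]

variable {V : Type} [AddCommGroup V] [Module (MvPolynomial (Fin n) ℤ) V] (c : Fin n → Fin n → V)

noncomputable def th1 (j : Fin n) (p : MvPolynomial (Fin n) ℤ) : V := ∑ m, if m < j then kap p m • c m j else 0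
noncomputable def rho (i : Fin n) (p : MvPolynomial (Fin n) ℤ) : V := ∑ m, if i < m then kap p m • c i m else 0
noncomputable def th (f : Fin n → MvPolynomial (Fin n) ℤ) : V := ∑ j, th1 c j (f j)

lemma th1_add (j : Fin n) (p q : MvPolynomial (Fin n) ℤ) : th1 c j (p + q) = th1 c j p + th1 c j q := by
  simp only [th1, map_add, Pi.add_apply, add_smul, ← Finset.sum_add_distrib]
  exact Finset.sum_congr rfl fun m _ => by split_ifs <;> simp
lemma rho_add (j : Fin n) (p q : MvPolynomial (Fin n) ℤ) : rho c j (p + q) = rho c j p + rho c j q := by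
  simp only [rho, map_add, Pi.add_apply, add_smul, ← Finset.sum_add_distrib]
  exact Finset.sum_congr rfl fun m _ => by split_ifs <;> simp
lemma th1_neg (j : Fin n) (p : MvPolynomial (Fin n) ℤ) : th1 c j (-p) = - th1 c j p := by
  simp only [th1, map_neg, Pi.neg_apply, neg_smul, ← Finset.sum_neg_distrib]
  exact Finset.sum_congr rfl fun m _ => by split_ifs <;> simp
lemma rho_neg (j : Fin n) (p : MvPolynomial (Fin n) ℤ) : rho c j (-p) = - rho c j p := by
  simp only [rho, map_neg, Pi.neg_apply, neg_smul, ← Finset.sum_neg_distrib]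
  exact Finset.sum_congr rfl fun m _ => by split_ifs <;> simp
lemma th1_zero (j : Fin n) : th1 c j 0 = 0 := by simp [th1]
lemma rho_zero (j : Fin n) : rho c j 0 = 0 := by simp [rho]

lemma th1_single (j m : Fin n) (p q : MvPolynomial (Fin n) ℤ) (h : kap p = Pi.single m q) :
    th1 c j p = if m < j then q • c m j else 0 := by
  rw [th1, Finset.sum_eq_single m]
  · simp [h]
  · intro b _ hb; simp [h, Pi.single_eq_of_ne hb]
  · simp
lemma rho_single (i m : Fin n) (p q : MvPolynomial (Fin n) ℤ) (h : kap p = Pi.single m q) :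
    rho c i p = if i < m then q • c i m else 0 := by
  rw [rho, Finset.sum_eq_single m]
  · simp [h]
  · intro b _ hb; simp [h, Pi.single_eq_of_ne hb]
  · simp

lemma kap_two (b : Fin n →₀ ℕ) (m i : Fin n) (h : ∀ j < m, b j = 0) (hi : m < i) :
    kap (X i * (X m * monomial b 1)) = Pi.single m (X i * monomial b (1:ℤ)) := by
  have h1 : (X i * (X m * monomial b 1) : MvPolynomial (Fin n) ℤ) = X m * monomial (Finsupp.single i 1 + b) 1 := by
    rw [monomial_succ]; ring
  rw [h1, kap_X_mul, monomial_succ]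
  intro j hj
  simp [h j hj, (hj.trans hi).ne']

variable (c0 : ∀ i, c i i = 0) (cs : ∀ i j, c i j = - c j i)
  (cJ : ∀ m i j, (X m : MvPolynomial (Fin n) ℤ) • c i j = (X i : MvPolynomial (Fin n) ℤ) • c m j - (X j : MvPolynomial (Fin n) ℤ) • c m i)
include c0 cs cJ

lemma idA (i j : Fin n) (p : MvPolynomial (Fin n) ℤ) :
    th1 c j (X i * p) - (X i : MvPolynomial (Fin n) ℤ) • th1 c j p = rho c i (X j * p) := by
  induction p using mono_ind with
  | h0 => simp [th1_zero, rho_zero]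
  | hadd a b ha hb =>
    rw [mul_add, mul_add, th1_add, th1_add, rho_add, ← ha, ← hb, smul_add]; abel
  | hneg a ha => rw [mul_neg, mul_neg, th1_neg, th1_neg, rho_neg, ← ha, smul_neg]; abel
  | hm b =>
    rcases mono_cases b with rfl | ⟨m, b, hb, rfl⟩
    · have h1 := kap_X_mul (n := n) 0 i (by simp)
      have h2 := kap_X_mul (n := n) 0 j (by simp)
      rw [th1_single c j i _ _ h1, rho_single c i j _ _ h2]
      have : th1 c j (monomial 0 1 : MvPolynomial (Fin n) ℤ) = 0 := by
        have h3 : kap (monomial 0 1 : MvPolynomial (Fin n) ℤ) = 0 := kap_one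
        simp only [th1, h3]; simp
      rw [this, smul_zero, sub_zero]
    · rw [monomial_succ]
      have hk := kap_X_mul b m hb
      have hle : ∀ i, i ≤ m → kap (X i * (X m * monomial b 1)) = Pi.single i (X m * monomial b (1 : ℤ)) := by
        intro i hi
        rw [← monomial_succ, kap_X_mul]
        intro l hl
        simp [hb l (hl.trans_le hi), (hl.trans_le hi).ne']
      rw [th1_single c j m _ _ hk]
      rcases le_or_gt i m with hi | hi <;> rcases le_or_gt j m with hj | hj
      · rw [th1_single c j i _ _ (hle i hi), rho_single c i j _ _ (hle j hj), if_neg (not_lt.2 hj)]; simp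
      · rw [th1_single c j i _ _ (hle i hi), rho_single c i m _ _ (kap_two b m j hb hj), if_pos hj, if_pos (hi.trans_lt hj)]
        rcases hi.eq_or_lt with rfl | hi
        · simp [smul_smul]
        · rw [if_pos hi, mul_comm (X m), ← smul_smul, cJ m i j, cs m i, smul_neg, sub_neg_eq_add, smul_add, smul_smul, smul_smul, smul_smul,
            mul_comm (X j), mul_comm (X i)]
          abel
      · rw [th1_single c j m _ _ (kap_two b m i hb hi), rho_single c i j _ _ (hle j hj), if_neg (not_lt.2 hj), if_neg (not_lt.2 hj),
          if_neg (not_lt.2 (hj.trans hi.le))]; simp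
      · rw [th1_single c j m _ _ (kap_two b m i hb hi), rho_single c i m _ _ (kap_two b m j hb hj), if_pos hj, if_pos hj,
          if_neg (not_lt.2 hi.le)]; simp [smul_smul]

lemma idB (i j : Fin n) : th1 c i (X j) + c i j = rho c i (X j) := by
  have h1 := kap_X_mul (n := n) 0 j (by simp)
  have e : (X j * monomial 0 1 : MvPolynomial (Fin n) ℤ) = X j := by
    have : (monomial 0 1 : MvPolynomial (Fin n) ℤ) = 1 := rfl
    rw [this, mul_one]
  rw [e] at h1
  rw [th1_single c i j _ _ h1, rho_single c i j _ _ h1]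
  have : (monomial 0 1 : MvPolynomial (Fin n) ℤ) = 1 := rfl
  rw [this, one_smul, one_smul]
  rcases lt_trichotomy i j with h | rfl | h
  · simp [h, h.not_gt]
  · simp [c0]
  · simp [h, h.not_gt, cs j i]

omit c0 cs cJ in
noncomputable def th1H (j : Fin n) : MvPolynomial (Fin n) ℤ →+ V := AddMonoidHom.mk' (th1 c j) (th1_add c j)
omit c0 cs cJ in
noncomputable def rhoH (j : Fin n) : MvPolynomial (Fin n) ℤ →+ V := AddMonoidHom.mk' (rho c j) (rho_add c j)

/-- key identity -/
lemma th_key (i : Fin n) (b : Fin n → ℤ) (h : Fin n → MvPolynomial (Fin n) ℤ)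
    (hF : h ⬝ᵥ X = (fun j => C (b j)) ⬝ᵥ X) :
    th c ((X i : MvPolynomial (Fin n) ℤ) • h - Pi.single i ((fun j => C (b j)) ⬝ᵥ X)) =
      (X i : MvPolynomial (Fin n) ℤ) • th c h + ∑ j, b j • c i j := by
  have hsub : th c ((X i : MvPolynomial (Fin n) ℤ) • h - Pi.single i ((fun j => C (b j)) ⬝ᵥ X)) =
      th c ((X i : MvPolynomial (Fin n) ℤ) • h) - th1 c i ((fun j => C (b j)) ⬝ᵥ X) := by
    have h1 : ∀ j, th1 c j (((X i : MvPolynomial (Fin n) ℤ) • h - Pi.single i ((fun j => C (b j)) ⬝ᵥ X) : Fin n → MvPolynomial (Fin n) ℤ) j) =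
        th1 c j (X i * h j) - if j = i then th1 c i ((fun j => C (b j)) ⬝ᵥ X) else 0 := by
      intro j
      rw [Pi.sub_apply, sub_eq_add_neg, th1_add, th1_neg, ← sub_eq_add_neg, Pi.smul_apply, smul_eq_mul]
      congr 1
      split_ifs with hj
      · subst hj; simp
      · rw [Pi.single_eq_of_ne hj, th1_zero]
    simp only [th, h1, Finset.sum_sub_distrib]
    simp
  have h2 : th c ((X i : MvPolynomial (Fin n) ℤ) • h) = (X i : MvPolynomial (Fin n) ℤ) • th c h + rho c i (h ⬝ᵥ X) := by
    have : rho c i (h ⬝ᵥ X) = ∑ j, rho c i (X j * h j) := by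
      rw [dotProduct]
      rw [show ∀ p, rho c i p = rhoH c i p from fun _ => rfl, map_sum]
      exact Finset.sum_congr rfl fun j _ => by rw [mul_comm]; rfl
    rw [this, th, th, Finset.smul_sum, ← Finset.sum_add_distrib]
    refine Finset.sum_congr rfl fun j _ => ?_
    rw [← idA c c0 cs cJ i j]; simp
  have hC : ∀ j, (C (b j) * X j : MvPolynomial (Fin n) ℤ) = b j • X j := fun j => by
    rw [zsmul_eq_mul]; simp
  have h3 : rho c i ((fun j => C (b j)) ⬝ᵥ X) = th1 c i ((fun j => C (b j)) ⬝ᵥ X) + ∑ j, b j • c i j := by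
    simp only [dotProduct, hC]
    rw [show ∀ p, rho c i p = rhoH c i p from fun _ => rfl, show ∀ p, th1 c i p = th1H c i p from fun _ => rfl,
      map_sum, map_sum, ← Finset.sum_add_distrib]
    refine Finset.sum_congr rfl fun j _ => ?_
    rw [map_zsmul, map_zsmul, ← smul_add]
    congr 1
    exact (idB c c0 cs cJ i j).symm
  rw [hsub, h2, hF, h3]; abel
end
end FML

namespace FML
set_option linter.unusedSectionVars false
open MvPolynomial
section
variable {n : ℕ}

noncomputable def al (n : ℕ) : (Fin n → ℤ) →+ MvPolynomial (Fin n) ℤ :=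
  AddMonoidHom.mk' (fun a => (fun j => C (a j)) ⬝ᵥ X) (by
    intro a b; simp [dotProduct, add_mul, Finset.sum_add_distrib])

lemma al_apply (a : Fin n → ℤ) : al n a = (fun j => C (a j)) ⬝ᵥ X := rfl
lemma al_single (i : Fin n) : al n (Pi.single i 1) = X i := by
  rw [al_apply, dotProduct, Finset.sum_eq_single i]
  · simp
  · intro b _ hb; simp [Pi.single_eq_of_ne hb]
  · simp

abbrev E (n : ℕ) := W (al n) (Fin n → MvPolynomial (Fin n) ℤ)

noncomputable def eE (i : Fin n) : E n := W.mk (al n) (Pi.single i 1) (Pi.single i 1)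

noncomputable def mu : M n →ₗ⁅ℤ⁆ E n := liftM W.metab eE

lemma mu_x (i : Fin n) : mu (xM i) = eE i := liftM_x _ _ _

lemma eE_lie_fst (i : Fin n) (y : E n) : ⁅eE i, y⁆.1 = 0 := rfl
lemma eE_lie_snd (i : Fin n) (y : E n) : ⁅eE i, y⁆.2 = (X i : MvPolynomial (Fin n) ℤ) • y.2 - Pi.single i (al n y.1) := by
  rw [W.lie_snd]
  change al n (Pi.single i 1) • y.2 - al n y.1 • (Pi.single i 1 : Fin n → MvPolynomial (Fin n) ℤ) = _
  rw [al_single, ← Pi.single_smul, smul_eq_mul, mul_one]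

noncomputable def fstH : E n →+ (Fin n → ℤ) := AddMonoidHom.fst _ _
noncomputable def sndH : E n →+ (Fin n → MvPolynomial (Fin n) ℤ) := AddMonoidHom.snd _ _
lemma fstH_apply (x : E n) : fstH x = x.1 := rfl
lemma sndH_apply (x : E n) : sndH x = x.2 := rfl

noncomputable def dotX : (Fin n → MvPolynomial (Fin n) ℤ) →+ MvPolynomial (Fin n) ℤ :=
  AddMonoidHom.mk' (fun f => f ⬝ᵥ X) (fun a b => add_dotProduct a b X)
lemma dotX_apply (f : Fin n → MvPolynomial (Fin n) ℤ) : dotX f = f ⬝ᵥ X := rfl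

noncomputable def muH : M n →+ E n := AddMonoidHom.mk' mu (fun a b => map_add mu a b)

lemma mu_F (z : M n) : (mu z).2 ⬝ᵥ X = al n (mu z).1 := by
  let N : AddSubgroup (M n) := ((dotX.comp sndH - (al n).comp fstH).comp muH).ker
  have hN : ∀ z, z ∈ N ↔ (mu z).2 ⬝ᵥ X = al n (mu z).1 := by
    intro z
    change (mu z).2 ⬝ᵥ X - al n (mu z).1 = 0 ↔ _
    exact sub_eq_zero
  rw [← hN]
  apply M_ind
  · intro i
    rw [hN, mu_x]
    change (Pi.single i 1 : Fin n → MvPolynomial (Fin n) ℤ) ⬝ᵥ X = al n (Pi.single i 1)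
    rw [al_single]; simp
  · intro i z hz
    rw [hN] at hz ⊢
    rw [LieHom.map_lie, mu_x, eE_lie_fst, eE_lie_snd, sub_dotProduct, smul_dotProduct, hz, map_zero,
      single_dotProduct, smul_eq_mul, mul_comm, sub_self]

/-- centralizer of the derived ring -/
def Vc (n : ℕ) : AddSubgroup (M n) where
  carrier := {v | ∀ a b : M n, ⁅v, ⁅a, b⁆⁆ = 0}
  add_mem' := fun {x y} hx hy a b => by rw [add_lie, hx a b, hy a b, add_zero]
  zero_mem' := fun a b => zero_lie _
  neg_mem' := fun {x} hx a b => by rw [neg_lie, hx a b, neg_zero]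

lemma Vc_lie (x : M n) (v : M n) (hv : v ∈ Vc n) : ⁅x, v⁆ ∈ Vc n := by
  intro a b
  rw [lie_lie, hv a b, hv x ⁅a, b⁆, lie_zero, sub_zero]

lemma Vc_br (x y : M n) : ⁅x, y⁆ ∈ Vc n := fun a b => M_metab x y a b

noncomputable def adV (i : Fin n) : Module.End ℤ (Vc n) :=
  (AddMonoidHom.mk' (fun v : Vc n => (⟨⁅(xM i : M n), (v : M n)⁆, Vc_lie _ _ v.2⟩ : Vc n)) (fun a b => by
    apply Subtype.ext; exact lie_add _ _ _)).toIntLinearMap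

lemma adV_apply (i : Fin n) (v : Vc n) : ((adV i v : Vc n) : M n) = ⁅(xM i : M n), (v : M n)⁆ := rfl

lemma mu_leftinv : ∃ Θ : E n → M n, ∀ z : M n, Θ (mu z) = z := by
  obtain ⟨φ, hφ⟩ := exists_action (adV (n := n)) (by
    intro i j
    ext v
    change ⁅(xM i : M n), ⁅(xM j : M n), (v : M n)⁆⁆ = ⁅(xM j : M n), ⁅(xM i : M n), (v : M n)⁆⁆
    have : ⁅(v : M n), ⁅(xM i : M n), (xM j : M n)⁆⁆ = 0 := v.2 _ _
    rw [← sub_eq_zero, ← lie_lie, ← lie_skew, this, neg_zero])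
  letI : Module (MvPolynomial (Fin n) ℤ) (Vc n) := Module.compHom (Vc n) φ
  have hs : ∀ (i : Fin n) (v : Vc n), (((X i : MvPolynomial (Fin n) ℤ) • v : Vc n) : M n) = ⁅(xM i : M n), (v : M n)⁆ := by
    intro i v
    change ((φ (X i) v : Vc n) : M n) = _
    rw [hφ, adV_apply]
  let c : Fin n → Fin n → Vc n := fun i j => ⟨⁅(xM i : M n), (xM j : M n)⁆, Vc_br _ _⟩
  have c0 : ∀ i, c i i = 0 := fun i => Subtype.ext (lie_self _)
  have cs : ∀ i j, c i j = - c j i := fun i j => Subtype.ext (lie_skew _ _).symm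
  have cJ : ∀ m i j, (X m : MvPolynomial (Fin n) ℤ) • c i j = (X i : MvPolynomial (Fin n) ℤ) • c m j - (X j : MvPolynomial (Fin n) ℤ) • c m i := by
    intro m i j
    apply Subtype.ext
    rw [AddSubgroup.coe_sub, hs, hs, hs]
    change ⁅(xM m : M n), ⁅(xM i : M n), (xM j : M n)⁆⁆ = ⁅(xM i : M n), ⁅(xM m : M n), (xM j : M n)⁆⁆ - ⁅(xM j : M n), ⁅(xM m : M n), (xM i : M n)⁆⁆
    rw [leibniz_lie (xM m : M n), ← lie_skew (xM j : M n)]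
    abel
  have thadd : ∀ f g : Fin n → MvPolynomial (Fin n) ℤ, th c (f + g) = th c f + th c g := by
    intro f g
    simp only [th, Pi.add_apply, th1_add, Finset.sum_add_distrib]
  let thH : (Fin n → MvPolynomial (Fin n) ℤ) →+ Vc n := AddMonoidHom.mk' (th c) thadd
  let lin : (Fin n → ℤ) →+ M n := AddMonoidHom.mk' (fun b => ∑ j, b j • (xM j : M n)) (by
    intro a b; simp [add_smul, Finset.sum_add_distrib])
  let Θ : E n →+ M n := lin.comp fstH + (Vc n).subtype.comp (thH.comp sndH)
  have hΘ : ∀ x : E n, Θ x = ∑ j, x.1 j • (xM j : M n) + ((th c x.2 : Vc n) : M n) := fun x => rfl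
  refine ⟨Θ, fun z => ?_⟩
  let N : AddSubgroup (M n) := (Θ.comp muH - AddMonoidHom.id (M n)).ker
  have hN : ∀ z, z ∈ N ↔ Θ (mu z) = z := by
    intro z
    change Θ (mu z) - z = 0 ↔ _
    exact sub_eq_zero
  rw [← hN]
  apply M_ind
  · intro i
    rw [hN, mu_x, hΘ]
    have h1 : ∑ j, (eE i : E n).1 j • (xM j : M n) = xM i := by
      change ∑ j, (Pi.single i 1 : Fin n → ℤ) j • (xM j : M n) = xM i
      rw [Finset.sum_eq_single i]
      · simp
      · intro b _ hb; rw [Pi.single_eq_of_ne hb, zero_smul]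
      · simp
    have h2 : th c (eE i : E n).2 = 0 := by
      change ∑ j, th1 c j ((Pi.single i 1 : Fin n → MvPolynomial (Fin n) ℤ) j) = 0
      refine Finset.sum_eq_zero fun j _ => ?_
      by_cases hj : j = i
      · subst hj
        rw [Pi.single_eq_same, th1, kap_one]; simp
      · rw [Pi.single_eq_of_ne hj, th1_zero]
    rw [h1, h2]; simp
  · intro i z hz
    rw [hN] at hz ⊢
    have hk := th_key c c0 cs cJ i (mu z).1 (mu z).2 (mu_F z)
    rw [LieHom.map_lie, mu_x, hΘ, eE_lie_fst, eE_lie_snd, al_apply, hk]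
    conv_rhs => rw [← hz, hΘ]
    rw [lie_add, AddSubgroup.coe_add, hs, lie_sum]
    simp only [Pi.zero_apply, zero_smul, Finset.sum_const_zero, zero_add, AddSubgroup.val_finset_sum, AddSubgroup.coe_zsmul]
    rw [add_comm]
    congr 1
    refine Finset.sum_congr rfl fun j _ => ?_
    rw [lie_zsmul]

lemma mu_inj : Function.Injective (mu (n := n)) := by
  obtain ⟨Θ, h⟩ := mu_leftinv (n := n)
  exact Function.LeftInverse.injective h

end
end FML

namespace FML
set_option linter.unusedSectionVars false
open MvPolynomial
section
variable {n : ℕ}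
lemma N_add (a b : Fin n → MvPolynomial (Fin n) ℤ) (ha : ∃ z, mu z = W.mk (al n) (0 : Fin n → ℤ) a) (hb : ∃ z, mu z = W.mk (al n) (0 : Fin n → ℤ) b) : ∃ z, mu z = W.mk (al n) (0 : Fin n → ℤ) (a + b) := by
  obtain ⟨z, hz⟩ := ha
  obtain ⟨w, hw⟩ := hb
  refine ⟨z + w, ?_⟩
  rw [map_add, hz, hw]
  refine W.ext ?_ ?_
  · rw [W.add_fst]; exact add_zero (0 : Fin n → ℤ)
  · rw [W.add_snd]; rfl

lemma N_C (a : ℤ) (f : Fin n → MvPolynomial (Fin n) ℤ) (hf : ∃ z, mu z = W.mk (al n) (0 : Fin n → ℤ) f) : ∃ z, mu z = W.mk (al n) (0 : Fin n → ℤ) ((C a : MvPolynomial (Fin n) ℤ) • f) := by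
  obtain ⟨z, hz⟩ := hf
  refine ⟨a • z, ?_⟩
  have : muH (a • z) = a • muH z := map_zsmul muH a z
  change muH (a • z) = _
  rw [this]
  change a • mu z = _
  rw [hz]
  refine W.ext ?_ ?_
  · exact smul_zero a
  · change a • f = (C a : MvPolynomial (Fin n) ℤ) • f
    ext1 j; simp

lemma N_X (i : Fin n) (f : Fin n → MvPolynomial (Fin n) ℤ) (hf : ∃ z, mu z = W.mk (al n) (0 : Fin n → ℤ) f) : ∃ z, mu z = W.mk (al n) (0 : Fin n → ℤ) ((X i : MvPolynomial (Fin n) ℤ) • f) := by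
  obtain ⟨z, hz⟩ := hf
  refine ⟨⁅(xM i : M n), z⁆, ?_⟩
  rw [LieHom.map_lie, mu_x, hz]
  refine W.ext rfl ?_
  rw [eE_lie_snd]
  change (X i : MvPolynomial (Fin n) ℤ) • f - (Pi.single i (al n 0) : Fin n → MvPolynomial (Fin n) ℤ) = (X i : MvPolynomial (Fin n) ℤ) • f
  simp

lemma N_zero : ∃ z, mu z = W.mk (al n) (0 : Fin n → ℤ) (0 : Fin n → MvPolynomial (Fin n) ℤ) := ⟨0, by rw [map_zero]; rfl⟩

lemma N_smul (p : MvPolynomial (Fin n) ℤ) : ∀ (f : Fin n → MvPolynomial (Fin n) ℤ), (∃ z, mu z = W.mk (al n) (0 : Fin n → ℤ) f) → ∃ z, mu z = W.mk (al n) (0 : Fin n → ℤ) (p • f) := by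
  induction p using MvPolynomial.induction_on with
  | C a => exact N_C a
  | add p q hp hq => intro f hf; rw [add_smul]; exact N_add _ _ (hp f hf) (hq f hf)
  | mul_X p i hp => intro f hf; rw [mul_smul]; exact hp _ (N_X i f hf)

def NN (n : ℕ) : Submodule (MvPolynomial (Fin n) ℤ) (Fin n → MvPolynomial (Fin n) ℤ) where
  carrier := {f | ∃ z, mu z = W.mk (al n) (0 : Fin n → ℤ) f}
  add_mem' := fun {a b} ha hb => N_add a b ha hb
  zero_mem' := N_zero
  smul_mem' := fun p f hf => N_smul p f hf

lemma mem_NN (f : Fin n → MvPolynomial (Fin n) ℤ) : f ∈ NN n ↔ ∃ z, mu z = W.mk (al n) (0 : Fin n → ℤ) f := Iff.rfl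

lemma eE_fst (i : Fin n) : (eE i : E n).1 = Pi.single i 1 := rfl
lemma eE_snd (i : Fin n) : (eE i : E n).2 = Pi.single i 1 := rfl
lemma mk_fst (a : Fin n → ℤ) (f : Fin n → MvPolynomial (Fin n) ℤ) : (W.mk (al n) a f).1 = a := rfl
lemma mk_snd (a : Fin n → ℤ) (f : Fin n → MvPolynomial (Fin n) ℤ) : (W.mk (al n) a f).2 = f := rfl
lemma sgl_smul (i : Fin n) (p : MvPolynomial (Fin n) ℤ) : (Pi.single i p : Fin n → MvPolynomial (Fin n) ℤ) = p • (Pi.single i 1 : Fin n → MvPolynomial (Fin n) ℤ) := by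
  ext1 j; simp [Pi.single_apply]

lemma NN_gen (i k : Fin n) : (X k : MvPolynomial (Fin n) ℤ) • (Pi.single i 1 : Fin n → MvPolynomial (Fin n) ℤ)
      - (X i : MvPolynomial (Fin n) ℤ) • (Pi.single k 1 : Fin n → MvPolynomial (Fin n) ℤ) ∈ NN n := by
  rw [mem_NN]
  refine ⟨⁅(xM k : M n), (xM i : M n)⁆, ?_⟩
  rw [LieHom.map_lie, mu_x, mu_x]
  refine W.ext ?_ ?_
  · rw [eE_lie_fst, mk_fst]
  · rw [eE_lie_snd, mk_snd, eE_snd, eE_fst, al_single, sgl_smul k]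

lemma mu_lin (x : E n) : ∃ z, mu z = W.mk (al n) x.1 (fun j => C (x.1 j)) := by
    refine ⟨∑ j, x.1 j • (xM j : M n), ?_⟩
    change muH _ = _
    rw [map_sum]
    have : ∀ j, muH (x.1 j • (xM j : M n)) = x.1 j • (eE j : E n) := by
      intro j
      have h0 : muH (xM j) = (eE j : E n) := mu_x j
      rw [map_zsmul, h0]
    simp only [this]
    refine W.ext ?_ ?_
    · change fstH _ = x.1
      rw [map_sum]
      simp only [map_zsmul]
      change ∑ j, x.1 j • (Pi.single j 1 : Fin n → ℤ) = x.1
      ext l; simp [Finset.sum_apply, Pi.single_apply]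
    · change sndH _ = (fun j => C (x.1 j))
      rw [map_sum]
      simp only [map_zsmul]
      change ∑ j, x.1 j • (Pi.single j 1 : Fin n → MvPolynomial (Fin n) ℤ) = (fun j => C (x.1 j))
      ext1 l; simp [Finset.sum_apply, Pi.single_apply]

lemma NN_kos (f : Fin n → MvPolynomial (Fin n) ℤ) (h0 : ∑ j, X j * f j = 0) : f ∈ NN n := by
    obtain ⟨s, hs, hsf⟩ := koszul f h0
    have s0 : ∀ i, s i i = 0 := fun i => self_eq_neg.1 (hs i i)
    have : f = ∑ i, ∑ k, if i < k then s i k • ((X k : MvPolynomial (Fin n) ℤ) • (Pi.single i 1 : Fin n → MvPolynomial (Fin n) ℤ)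
      - (X i : MvPolynomial (Fin n) ℤ) • (Pi.single k 1 : Fin n → MvPolynomial (Fin n) ℤ)) else 0 := by
      ext1 l
      rw [hsf l]
      have hterm : ∀ i k, (if i < k then s i k • ((X k : MvPolynomial (Fin n) ℤ) • (Pi.single i 1 : Fin n → MvPolynomial (Fin n) ℤ)
          - (X i : MvPolynomial (Fin n) ℤ) • (Pi.single k 1 : Fin n → MvPolynomial (Fin n) ℤ)) else 0) l
          = (if l = i then (if l < k then s l k * X k else 0) else 0) - (if l = k then (if i < l then s i l * X i else 0) else 0) := by
        intro i k
        by_cases h1 : l = i <;> by_cases h2 : l = k <;> by_cases h3 : i < k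
        · subst h1; subst h2; simp at h3
        · subst h1; subst h2; simp
        · subst h1; simp [h3, h2]
        · subst h1; simp [h3, h2]
        · subst h2; simp [h3, h1]
        · subst h2; simp [h3, h1]
        · simp [h1, h2, h3]
        · simp [h1, h2, h3]
      simp only [Finset.sum_apply, hterm, Finset.sum_sub_distrib]
      have e1 : ∑ i, ∑ k, (if l = i then (if l < k then s l k * X k else 0) else 0) = ∑ k, if l < k then s l k * X k else 0 := by
        rw [Finset.sum_comm]; simp
      have e2 : ∑ i, ∑ k, (if l = k then (if i < l then s i l * X i else 0) else 0) = ∑ i, if i < l then s i l * X i else 0 := by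
        simp
      rw [e1, e2, ← Finset.sum_sub_distrib]
      refine Finset.sum_congr rfl fun k _ => ?_
      rcases lt_trichotomy l k with h | rfl | h
      · simp [h, h.not_gt]
      · simp [s0]
      · simp [h, h.not_gt, hs l k]
    rw [this]
    refine (NN n).sum_mem fun i _ => (NN n).sum_mem fun k _ => ?_
    split_ifs
    · exact (NN n).smul_mem _ (NN_gen i k)
    · exact (NN n).zero_mem

lemma mu_surjF (x : E n) (hx : x.2 ⬝ᵥ X = al n x.1) : ∃ z, mu z = x := by
  obtain ⟨z, hz⟩ := mu_lin x
  obtain ⟨w, hw⟩ := (mem_NN _).1 (NN_kos (fun j => x.2 j - C (x.1 j)) (by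
      have h1 : ∑ j, X j * (x.2 j - C (x.1 j)) = x.2 ⬝ᵥ X - al n x.1 := by
        rw [al_apply, ← sub_dotProduct]
        exact Finset.sum_congr rfl fun j _ => mul_comm _ _
      rw [h1, hx, sub_self]))
  refine ⟨z + w, ?_⟩
  rw [map_add, hz, hw]
  refine W.ext ?_ ?_
  · rw [W.add_fst]; exact add_zero x.1
  · rw [W.add_snd]
    change (fun j => C (x.1 j)) + (fun j => x.2 j - C (x.1 j)) = x.2
    ext1 j; simp
end
end FML

namespace FML
set_option linter.unusedSectionVars false
open MvPolynomial
section

lemma prim_unif (n k : ℕ) (hk : k ≤ n) (g : Fin k → FreeLieAlgebra ℤ (Fin n))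
    (hp : IsPrimitiveSystem n k hk (fun j => mkM n (g j))) : IsUniformlyDistributed n k g := by
  intro R _ _ _ hR0 pv
  have hR : Metab R := hR0
  obtain ⟨h, hfree, hg⟩ := hp
  have hbij : Function.Bijective (fun (r : Fin n → R) (i : Fin n) => liftM (A := R) hR r (h i)) := by
    constructor
    · intro r s hrs
      have := (hfree R hR (fun i => liftM (A := R) hR s (h i))).unique (y₁ := liftM (A := R) hR r) (y₂ := liftM (A := R) hR s)
        (fun i => congrFun hrs i) (fun i => rfl)
      ext i
      rw [← liftM_x (A := R) hR r i, this, liftM_x]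
    · intro f
      obtain ⟨φ, hφ, -⟩ := hfree R hR f
      refine ⟨fun i => φ (xM i), ?_⟩
      have : liftM (A := R) hR (fun i => φ (xM i)) = φ := hom_ext (fun i => liftM_x _ _ _)
      ext i
      simp only [this, hφ]
  obtain ⟨m, rfl⟩ := Nat.exists_eq_add_of_le hk
  let e := Equiv.ofBijective _ hbij
  have e1 : {r : Fin (k+m) → R // ∀ j, (FreeLieAlgebra.lift ℤ r) (g j) = pv j} ≃ {s : Fin (k+m) → R // ∀ j, s (Fin.castAdd m j) = pv j} := by
    refine e.subtypeEquiv fun r => ?_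
    refine forall_congr' fun j => ?_
    have : e r (Fin.castAdd m j) = FreeLieAlgebra.lift ℤ r (g j) := by
      change liftM (A := R) hR r (h (Fin.castLE hk j)) = _
      rw [hg]; exact liftM_mk (A := R) hR r (g j)
    rw [this]
  have e2 : {s : Fin (k+m) → R // ∀ j, s (Fin.castAdd m j) = pv j} ≃ (Fin m → R) :=
    { toFun := fun s i => s.1 (Fin.natAdd k i)
      invFun := fun t => ⟨Fin.append pv t, fun j => Fin.append_left _ _ _⟩
      left_inv := fun s => by
        apply Subtype.ext
        funext i
        refine Fin.addCases (fun j => ?_) (fun j => ?_) i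
        · simp [s.2 j]
        · simp
      right_inv := fun t => by funext i; simp }
  rw [Nat.card_congr (e1.trans e2), Nat.card_eq_fintype_card]
  simp

end

section
variable {n : ℕ} {F : Type} [CommRing F]

noncomputable def evE (a v : Fin n → F) : E n →ₗ⁅ℤ⁆ W (AddMonoidHom.id F) F :=
  let φ : E n →+ W (AddMonoidHom.id F) F := AddMonoidHom.mk'
    (fun x => W.mk (AddMonoidHom.id F) (∑ i, (x.1 i : F) * a i) (∑ i, aeval a (x.2 i) * v i)) (by
      intro x y
      refine W.ext ?_ ?_
      · change ∑ i, (((x.1 + y.1) i : ℤ) : F) * a i = ∑ i, (x.1 i : F) * a i + ∑ i, (y.1 i : F) * a i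
        simp [add_mul, Finset.sum_add_distrib]
      · change ∑ i, aeval a ((x.2 + y.2) i) * v i = ∑ i, aeval a (x.2 i) * v i + ∑ i, aeval a (y.2 i) * v i
        simp [add_mul, Finset.sum_add_distrib])
  { toFun := φ
    map_add' := φ.map_add
    map_smul' := fun c x => map_zsmul φ c x
    map_lie' := by
      intro x y
      have hal : ∀ b : Fin n → ℤ, aeval a (al n b) = ∑ i, (b i : F) * a i := by
        intro b
        rw [al_apply, dotProduct, map_sum]
        simp
      refine W.ext ?_ ?_
      · change ∑ i, (((0 : Fin n → ℤ) i : ℤ) : F) * a i = 0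
        simp
      · change ∑ i, aeval a ((al n x.1 • y.2 - al n y.1 • x.2) i) * v i =
          (∑ i, (x.1 i : F) * a i) • (∑ i, aeval a (y.2 i) * v i) - (∑ i, (y.1 i : F) * a i) • (∑ i, aeval a (x.2 i) * v i)
        rw [← hal, ← hal]
        simp only [Pi.sub_apply, Pi.smul_apply, smul_eq_mul, map_sub, map_mul, sub_mul, Finset.sum_sub_distrib, Finset.mul_sum, mul_assoc] }

lemma evE_mu (a v : Fin n → F) (z : FreeLieAlgebra ℤ (Fin n)) :
    FreeLieAlgebra.lift ℤ (fun i => W.mk (AddMonoidHom.id F) (a i) (v i)) z =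
      W.mk (AddMonoidHom.id F) (∑ i, ((mu (mkM n z)).1 i : F) * a i) (∑ i, aeval a ((mu (mkM n z)).2 i) * v i) := by
  have : liftM (A := W (AddMonoidHom.id F) F) W.metab (fun i => W.mk (AddMonoidHom.id F) (a i) (v i)) = (evE a v).comp mu := by
    refine hom_ext fun i => ?_
    rw [liftM_x, LieHom.comp_apply, mu_x]
    refine W.ext ?_ ?_
    · change a i = ∑ j, (((Pi.single i 1 : Fin n → ℤ) j : ℤ) : F) * a j
      simp [Pi.single_apply]
    · change v i = ∑ j, aeval a ((Pi.single i 1 : Fin n → MvPolynomial (Fin n) ℤ) j) * v j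
      rw [Finset.sum_eq_single i]
      · simp
      · intro b _ hb; simp [Pi.single_eq_of_ne hb]
      · simp
  rw [← liftM_mk (A := W (AddMonoidHom.id F) F) W.metab, this]
  rfl
end

section
open Classical in
lemma count_surj {V U : Type} [AddCommGroup V] [AddCommGroup U] [Fintype V] [Fintype U] (N : ℕ)
    (hN : Fintype.card V = N * Fintype.card U) (L : V → U) (T : V → V →+ U)
    (h : ∀ p q, Nat.card {x : V × V // L x.1 = p ∧ T x.1 x.2 = q} = N * N) (a : V) : Function.Surjective (T a) := by
  have hU : 0 < Fintype.card U := Fintype.card_pos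
  have hVp : 0 < Fintype.card V := Fintype.card_pos
  let c : V → U → ℕ := fun a q => (Finset.univ.filter fun v => T a v = q).card
  have hc : ∀ a, ∑ q, c a q = Fintype.card V := by
    intro a
    exact (Finset.card_eq_sum_card_fiberwise (fun x _ => Finset.mem_univ (T a x))).symm
  have hS : ∀ p q, ∑ a ∈ Finset.univ.filter (fun a => L a = p), c a q = N * N := by
    intro p q
    rw [← h p q, Nat.card_eq_fintype_card, Fintype.card_subtype]
    rw [Finset.card_eq_sum_card_fiberwise (f := Prod.fst) (t := Finset.univ.filter (fun a => L a = p))]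
    · refine Finset.sum_congr rfl fun b hb => ?_
      simp only [Finset.mem_filter, Finset.mem_univ, true_and] at hb
      refine Finset.card_bij (fun v _ => (b, v)) ?_ ?_ ?_
      · intro v hv; simp at hv ⊢; exact ⟨hb, hv⟩
      · intro v _ w _ hvw; simpa using hvw
      · rintro ⟨x, y⟩ hxy
        simp at hxy
        obtain ⟨⟨h1, h2⟩, rfl⟩ := hxy
        exact ⟨y, by simpa using h2, rfl⟩
    · intro x hx
      simp at hx ⊢
      exact hx.1
  have hNp : 0 < N := by
    rcases Nat.eq_zero_or_pos N with h0 | h0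
    · rw [h0, zero_mul] at hN; omega
    · exact h0
  have hcard : ∀ p, (Finset.univ.filter (fun a => L a = p)).card = N := by
    intro p
    have h1 : ∑ q : U, ∑ a ∈ Finset.univ.filter (fun a => L a = p), c a q = Fintype.card U * (N * N) := by
      simp [hS]
    rw [Finset.sum_comm] at h1
    simp only [hc, Finset.sum_const, smul_eq_mul, hN] at h1
    have : N * Fintype.card U > 0 := Nat.mul_pos hNp hU
    apply Nat.eq_of_mul_eq_mul_right this
    rw [h1]; ring
  have hker : ∀ b, c b 0 * Nat.card (T b).range = N * Fintype.card U := by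
    intro b
    have h1 := AddSubgroup.card_mul_index (T b).ker
    rw [AddSubgroup.index_ker, Nat.card_eq_fintype_card (α := V), hN] at h1
    rw [← h1]
    congr 1
    change _ = Nat.card {v // T b v = 0}
    rw [Nat.card_eq_fintype_card, Fintype.card_subtype]
  have hr : ∀ b, Nat.card (T b).range ≤ Fintype.card U := by
    intro b
    rw [← Nat.card_eq_fintype_card]
    exact Nat.card_le_card_of_injective _ Subtype.val_injective
  have hge : ∀ b, N ≤ c b 0 := by
    intro b
    have := hker b
    by_contra hlt
    push Not at hlt
    have h2 := Nat.mul_le_mul_left (c b 0) (hr b)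
    have h3 := Nat.mul_lt_mul_of_pos_right hlt hU
    omega
  have heq : N = c a 0 := by
    have h1 : ∑ b ∈ Finset.univ.filter (fun b => L b = L a), N = ∑ b ∈ Finset.univ.filter (fun b => L b = L a), c b 0 := by
      rw [hS]; simp [hcard]
    exact (Finset.sum_eq_sum_iff_of_le (fun b _ => hge b)).1 h1 a (by simp)
  have h5 := hker a
  rw [← heq] at h5
  have h6 := Nat.eq_of_mul_eq_mul_left hNp h5
  rw [← Nat.card_eq_fintype_card] at h6
  have := AddSubgroup.eq_top_of_card_eq _ h6
  exact AddMonoidHom.range_eq_top.1 this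
end

section
lemma jacZ : IsJacobsonRing ℤ := by
  rw [isJacobsonRing_iff_prime_eq]
  intro P hP
  by_cases h : P = ⊥
  · subst h
    rw [eq_bot_iff]
    intro x hx
    have h1 := Ideal.mem_jacobson_bot.1 hx (3 * x)
    rw [Int.isUnit_iff] at h1
    rw [Ideal.mem_bot]
    rcases h1 with h1 | h1
    · have : x * x = 0 := by linarith
      simpa using this
    · nlinarith [mul_self_nonneg x]
  · have := hP.isMaximal h
    exact Ideal.jacobson_eq_self_of_isMaximal

lemma aeval_hom {F : Type} [CommRing F] {n : ℕ} (q : MvPolynomial (Fin n) ℤ →+* F) (p : MvPolynomial (Fin n) ℤ) :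
    aeval (fun i => q (X i)) p = q p := by
  have : (aeval (fun i => q (X i)) : MvPolynomial (Fin n) ℤ →ₐ[ℤ] F).toRingHom = q := by
    apply MvPolynomial.ringHom_ext
    · intro r; simp
    · intro i; simp
  exact DFunLike.congr_fun this p

lemma field_fin (F : Type) [Field F] {n : ℕ} (q : MvPolynomial (Fin n) ℤ →+* F) (hq : Function.Surjective q) : Finite F := by
  haveI := jacZ
  haveI : Algebra.FiniteType ℤ F := Algebra.FiniteType.of_surjective (aeval (fun i => q (X i))) (fun y => by
    obtain ⟨x, hx⟩ := hq y
    exact ⟨x, by rw [aeval_hom, hx]⟩)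
  haveI h1 : Module.Finite ℤ F := finite_of_finite_type_of_isJacobsonRing ℤ F
  have hn : ¬ Function.Injective (algebraMap ℤ F) := by
    intro hinj
    have := isField_of_isIntegral_of_isField hinj (Field.toIsField F)
    exact Int.not_isField this
  rw [injective_iff_map_eq_zero] at hn
  push Not at hn
  obtain ⟨p, hp, hp0⟩ := hn
  apply Module.finite_of_fg_torsion
  intro x
  refine ⟨⟨p, mem_nonZeroDivisors_of_ne_zero hp0⟩, ?_⟩
  change p • x = 0
  rw [zsmul_eq_mul]
  have : (p : F) = 0 := by simpa using hp
  rw [this, zero_mul]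
end

section
variable {k m : ℕ}

lemma surj_field (g : Fin k → FreeLieAlgebra ℤ (Fin (k+m))) (hu : IsUniformlyDistributed (k+m) k g)
    (F : Type) [CommRing F] [Fintype F] (a : Fin (k+m) → F) (w : Fin k → F) :
    ∃ v : Fin (k+m) → F, ∀ j, ∑ i, aeval a ((mu (mkM (k+m) (g j))).2 i) * v i = w j := by
  let T : (Fin (k+m) → F) → (Fin (k+m) → F) →+ (Fin k → F) := fun a => AddMonoidHom.mk'
    (fun v j => ∑ i, aeval a ((mu (mkM (k+m) (g j))).2 i) * v i) (by
      intro v w; ext j; simp [mul_add, Finset.sum_add_distrib])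
  let L : (Fin (k+m) → F) → (Fin k → F) := fun a j => ∑ i, ((mu (mkM (k+m) (g j))).1 i : F) * a i
  have hs := count_surj (Fintype.card F ^ m) (by simp [pow_add, mul_comm]) L T (by
    intro p q
    letI : Fintype (W (AddMonoidHom.id F) F) := inferInstanceAs (Fintype (F × F))
    have h1 := hu (W (AddMonoidHom.id F) F) W.metab (fun j => W.mk (AddMonoidHom.id F) (p j) (q j))
    have h2 : Fintype.card (W (AddMonoidHom.id F) F) = Fintype.card F * Fintype.card F := Fintype.card_prod F F
    rw [h2, Nat.add_sub_cancel_left, mul_pow] at h1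
    rw [← h1]
    let e : (Fin (k+m) → F) × (Fin (k+m) → F) ≃ (Fin (k+m) → W (AddMonoidHom.id F) F) :=
      { toFun := fun x i => W.mk (AddMonoidHom.id F) (x.1 i) (x.2 i)
        invFun := fun r => (fun i => (r i).1, fun i => (r i).2)
        left_inv := fun x => rfl
        right_inv := fun r => rfl }
    refine Nat.card_congr (e.subtypeEquiv fun x => ?_)
    have h3 : ∀ j, FreeLieAlgebra.lift ℤ (e x) (g j) = W.mk (AddMonoidHom.id F) (L x.1 j) (T x.1 x.2 j) := fun j => evE_mu x.1 x.2 (g j)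
    simp only [h3]
    constructor
    · rintro ⟨rfl, rfl⟩ j; rfl
    · intro h
      exact ⟨funext fun j => congrArg Prod.fst (h j), funext fun j => congrArg Prod.snd (h j)⟩) a w
  obtain ⟨v, hv⟩ := hs
  exact ⟨v, fun j => congrFun hv j⟩

lemma surj_glob (J : Fin k → Fin (k+m) → MvPolynomial (Fin (k+m)) ℤ)
    (hJ : ∀ (F : Type) [CommRing F] [Fintype F] (a : Fin (k+m) → F) (w : Fin k → F),
      ∃ v : Fin (k+m) → F, ∀ j, ∑ i, aeval a (J j i) * v i = w j) :
    ∃ K : Fin k → Fin (k+m) → MvPolynomial (Fin (k+m)) ℤ, ∀ i j, J i ⬝ᵥ K j = if i = j then 1 else 0 := by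
  let JL : (Fin (k+m) → (MvPolynomial (Fin (k+m)) ℤ)) →ₗ[(MvPolynomial (Fin (k+m)) ℤ)] (Fin k → (MvPolynomial (Fin (k+m)) ℤ)) := Matrix.mulVecLin (Matrix.of J)
  have hJL : ∀ x j, JL x j = J j ⬝ᵥ x := fun x j => rfl
  suffices hs : LinearMap.range JL = ⊤ by
    have hs' := LinearMap.range_eq_top.1 hs
    choose K hK using fun j => hs' (Pi.single j 1)
    refine ⟨K, fun i j => ?_⟩
    rw [← hJL, hK, Pi.single_apply]
  rcases eq_top_or_exists_le_coatom (LinearMap.range JL) with h | ⟨N, hN, hle⟩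
  · exact h
  exfalso
  have hsimp : IsSimpleModule (MvPolynomial (Fin (k+m)) ℤ) ((Fin k → (MvPolynomial (Fin (k+m)) ℤ)) ⧸ N) := isSimpleModule_iff_isCoatom.2 hN
  obtain ⟨I, hI, ⟨e⟩⟩ := isSimpleModule_iff_quot_maximal.1 hsimp
  haveI : Nontrivial ((MvPolynomial (Fin (k+m)) ℤ) ⧸ I) := Ideal.Quotient.nontrivial_iff.2 hI.ne_top
  haveI : Finite ((MvPolynomial (Fin (k+m)) ℤ) ⧸ I) :=
    letI : Field ((MvPolynomial (Fin (k+m)) ℤ) ⧸ I) := Ideal.Quotient.field I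
    field_fin _ (Ideal.Quotient.mk I) Ideal.Quotient.mk_surjective
  letI : Fintype ((MvPolynomial (Fin (k+m)) ℤ) ⧸ I) := Fintype.ofFinite _
  let l : (Fin k → (MvPolynomial (Fin (k+m)) ℤ)) →ₗ[(MvPolynomial (Fin (k+m)) ℤ)] ((MvPolynomial (Fin (k+m)) ℤ) ⧸ I) := e.toLinearMap.comp N.mkQ
  have hl0 : ∀ x, l (JL x) = 0 := by
    intro x
    have : N.mkQ (JL x) = 0 := (Submodule.Quotient.mk_eq_zero N).2 (hle ⟨x, rfl⟩)
    change e (N.mkQ (JL x)) = 0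
    rw [this, map_zero]
  have hlf : ∀ y : Fin k → (MvPolynomial (Fin (k+m)) ℤ), l y = ∑ j, Ideal.Quotient.mk I (y j) * l (Pi.single j 1) := by
    intro y
    conv_lhs => rw [pi_eq_sum_univ' y]
    rw [map_sum]
    refine Finset.sum_congr rfl fun j _ => ?_
    rw [map_smul]
    obtain ⟨t, ht⟩ := Ideal.Quotient.mk_surjective (l (Pi.single j 1))
    rw [← ht]; rfl
  have hz : ∀ j, l (Pi.single j 1) = 0 := by
    intro j0
    obtain ⟨v, hv⟩ := hJ ((MvPolynomial (Fin (k+m)) ℤ) ⧸ I) (fun i => Ideal.Quotient.mk I (X i)) (Pi.single j0 1)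
    choose x hx using fun i => Ideal.Quotient.mk_surjective (I := I) (v i)
    have h1 := hl0 x
    rw [hlf] at h1
    have h2 : ∀ j, Ideal.Quotient.mk I (JL x j) = (Pi.single j0 1 : Fin k → (MvPolynomial (Fin (k+m)) ℤ) ⧸ I) j := by
      intro j
      rw [← hv j, hJL, dotProduct, map_sum]
      refine Finset.sum_congr rfl fun i _ => ?_
      rw [aeval_hom, map_mul, hx]
    simp only [h2] at h1
    rw [Finset.sum_eq_single j0] at h1
    · simpa using h1
    · intro b _ hb; rw [Pi.single_eq_of_ne hb, zero_mul]
    · simp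
  have hl : ∀ y, l y = 0 := fun y => by rw [hlf]; simp [hz]
  obtain ⟨y, hy⟩ := Submodule.mkQ_surjective N (e.symm 1)
  have := hl y
  change e (N.mkQ y) = 0 at this
  rw [hy, e.apply_symm_apply] at this
  exact one_ne_zero this
end
end FML

namespace FML
set_option linter.unusedSectionVars false
open MvPolynomial
section
variable {n : ℕ}

lemma sub_al (A : Matrix (Fin n) (Fin n) ℤ) (a : Fin n → ℤ) : sub A (al n a) = al n (Matrix.vecMul a A) := by
  rw [al_apply, al_apply, dotProduct, map_sum]
  simp only [map_mul, sub_X, Matrix.mulVec, dotProduct, Matrix.vecMul, Matrix.map_apply, map_sum, Finset.mul_sum, Finset.sum_mul]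
  rw [Finset.sum_comm]
  refine Finset.sum_congr rfl fun i _ => Finset.sum_congr rfl fun j _ => ?_
  have : sub A (C (a j)) = C (a j) := (sub A).commutes (a j)
  rw [this, mul_assoc]

noncomputable def PhiF (D : Matrix (Fin n) (Fin n) (MvPolynomial (Fin n) ℤ)) (A : Matrix (Fin n) (Fin n) ℤ) (x : E n) : E n :=
  W.mk (al n) (Matrix.vecMul x.1 A) (Matrix.vecMul (fun i => sub A (x.2 i)) D)

lemma PhiF_fst (D : Matrix (Fin n) (Fin n) (MvPolynomial (Fin n) ℤ)) (A : Matrix (Fin n) (Fin n) ℤ) (x : E n) :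
  (PhiF D A x).1 = Matrix.vecMul x.1 A := rfl
lemma PhiF_snd (D : Matrix (Fin n) (Fin n) (MvPolynomial (Fin n) ℤ)) (A : Matrix (Fin n) (Fin n) ℤ) (x : E n) :
  (PhiF D A x).2 = Matrix.vecMul (fun i => sub A (x.2 i)) D := rfl

lemma PhiF_add (D : Matrix (Fin n) (Fin n) (MvPolynomial (Fin n) ℤ)) (A : Matrix (Fin n) (Fin n) ℤ) (x y : E n) :
    PhiF D A (x + y) = PhiF D A x + PhiF D A y := by
  refine W.ext ?_ ?_
  · rw [W.add_fst, PhiF_fst, PhiF_fst, PhiF_fst, W.add_fst, Matrix.add_vecMul]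
  · rw [W.add_snd, PhiF_snd, PhiF_snd, PhiF_snd, W.add_snd, ← Matrix.add_vecMul]
    congr 1
    ext1 i
    exact map_add (sub A) _ _

lemma PhiF_lie (D : Matrix (Fin n) (Fin n) (MvPolynomial (Fin n) ℤ)) (A : Matrix (Fin n) (Fin n) ℤ) (x y : E n) :
    PhiF D A ⁅x, y⁆ = ⁅PhiF D A x, PhiF D A y⁆ := by
  refine W.ext ?_ ?_
  · rw [W.lie_fst, PhiF_fst, W.lie_fst, Matrix.zero_vecMul]
  · rw [W.lie_snd, PhiF_snd, PhiF_snd, PhiF_snd, W.lie_snd, PhiF_fst, PhiF_fst, ← sub_al, ← sub_al,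
      ← Matrix.smul_vecMul, ← Matrix.smul_vecMul, ← Matrix.sub_vecMul]
    congr 1
    ext1 i
    simp only [Pi.sub_apply, Pi.smul_apply, smul_eq_mul, map_sub, map_mul]

noncomputable def Phi (D : Matrix (Fin n) (Fin n) (MvPolynomial (Fin n) ℤ)) (A : Matrix (Fin n) (Fin n) ℤ) : E n →ₗ⁅ℤ⁆ E n :=
  { toFun := PhiF D A
    map_add' := PhiF_add D A
    map_smul' := fun c x => map_zsmul (AddMonoidHom.mk' (PhiF D A) (PhiF_add D A)) c x
    map_lie' := fun {x y} => PhiF_lie D A x y }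
lemma Phi_apply (D : Matrix (Fin n) (Fin n) (MvPolynomial (Fin n) ℤ)) (A : Matrix (Fin n) (Fin n) ℤ) (x : E n) : Phi D A x = PhiF D A x := rfl

lemma unit_inv {R : Type} [CommRing R] {D : Matrix (Fin n) (Fin n) R} (h : IsUnit D.det) : ∃ B, D * B = 1 ∧ B * D = 1 :=
  ⟨D⁻¹, Matrix.mul_nonsing_inv D h, Matrix.nonsing_inv_mul D h⟩

lemma PhiF_inj (D : Matrix (Fin n) (Fin n) (MvPolynomial (Fin n) ℤ)) (A : Matrix (Fin n) (Fin n) ℤ)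
    (hD : IsUnit D.det) (hA : IsUnit A.det) : Function.Injective (PhiF D A) := by
  obtain ⟨B, hB1, hB2⟩ := unit_inv hA
  obtain ⟨G, hG1, hG2⟩ := unit_inv hD
  intro x y h
  have h1 : Matrix.vecMul x.1 A = Matrix.vecMul y.1 A := congrArg (fun z : E n => z.1) h
  have h2 : Matrix.vecMul (fun i => sub A (x.2 i)) D = Matrix.vecMul (fun i => sub A (y.2 i)) D := congrArg (fun z : E n => z.2) h
  refine W.ext ?_ ?_
  · have := congrArg (fun v => Matrix.vecMul v B) h1
    simpa only [Matrix.vecMul_vecMul, hB1, Matrix.vecMul_one] using this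
  · have := congrArg (fun v => Matrix.vecMul v G) h2
    simp only [Matrix.vecMul_vecMul, hG1, Matrix.vecMul_one] at this
    ext1 i
    have h3 := congrArg (sub B) (congrFun this i)
    rwa [sub_sub B A hB1, sub_sub B A hB1] at h3

lemma PhiF_surj (D : Matrix (Fin n) (Fin n) (MvPolynomial (Fin n) ℤ)) (A : Matrix (Fin n) (Fin n) ℤ)
    (hD : IsUnit D.det) (hA : IsUnit A.det) : Function.Surjective (PhiF D A) := by
  obtain ⟨B, hB1, hB2⟩ := unit_inv hA
  obtain ⟨G, hG1, hG2⟩ := unit_inv hD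
  intro y
  refine ⟨W.mk (al n) (Matrix.vecMul y.1 B) (fun i => sub B (Matrix.vecMul y.2 G i)), ?_⟩
  refine W.ext ?_ ?_
  · rw [PhiF_fst, mk_fst, Matrix.vecMul_vecMul, hB2, Matrix.vecMul_one]
  · rw [PhiF_snd, mk_snd]
    simp only [sub_sub A B hB2]
    change Matrix.vecMul (Matrix.vecMul y.2 G) D = y.2
    rw [Matrix.vecMul_vecMul, hG2, Matrix.vecMul_one]

lemma PhiF_F (D : Matrix (Fin n) (Fin n) (MvPolynomial (Fin n) ℤ)) (A : Matrix (Fin n) (Fin n) ℤ)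
    (hA : IsUnit A.det) (hDA : D.mulVec X = (A.map C).mulVec X) (x : E n)
    (h : (PhiF D A x).2 ⬝ᵥ X = al n (PhiF D A x).1) : x.2 ⬝ᵥ X = al n x.1 := by
  obtain ⟨B, hB1, hB2⟩ := unit_inv hA
  have h1 : sub A (x.2 ⬝ᵥ X) = sub A (al n x.1) := by
    rw [sub_al, ← PhiF_fst D, ← h, PhiF_snd, ← Matrix.dotProduct_mulVec, hDA, dotProduct, map_sum, dotProduct]
    refine Finset.sum_congr rfl fun i _ => ?_
    rw [map_mul, sub_X]
  have h3 := congrArg (sub B) h1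
  rwa [sub_sub B A hB1, sub_sub B A hB1] at h3

lemma freeGen (D : Matrix (Fin n) (Fin n) (MvPolynomial (Fin n) ℤ)) (A : Matrix (Fin n) (Fin n) ℤ)
    (hD : IsUnit D.det) (hA : IsUnit A.det) (hDA : D.mulVec X = (A.map C).mulVec X)
    (h : Fin n → M n) (hh : ∀ i, mu (h i) = W.mk (al n) (A i) (D i)) : IsFreeGenSet n h := by
  let φ : M n →ₗ⁅ℤ⁆ M n := liftM M_metab h
  have hφx : ∀ i, φ (xM i) = h i := fun i => liftM_x _ _ _
  have hc : mu.comp φ = (Phi D A).comp mu := by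
    refine hom_ext fun i => ?_
    rw [LieHom.comp_apply, LieHom.comp_apply, hφx, hh, mu_x, Phi_apply]
    refine W.ext ?_ ?_
    · rw [PhiF_fst, eE_fst, mk_fst, Matrix.single_one_vecMul]; rfl
    · rw [PhiF_snd, eE_snd, mk_snd]
      have : (fun j => sub A ((Pi.single i 1 : Fin n → MvPolynomial (Fin n) ℤ) j)) = Pi.single i 1 := by
        ext1 j
        by_cases hj : j = i
        · subst hj; rw [Pi.single_eq_same, map_one]
        · rw [Pi.single_eq_of_ne hj, map_zero]
      rw [this, Matrix.single_one_vecMul]; rfl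
  have hc' : ∀ z, mu (φ z) = PhiF D A (mu z) := fun z => DFunLike.congr_fun hc z
  have hbij : Function.Bijective φ := by
    constructor
    · intro z w hzw
      apply mu_inj
      apply PhiF_inj D A hD hA
      rw [← hc', ← hc', hzw]
    · intro z
      obtain ⟨x, hx⟩ := PhiF_surj D A hD hA (mu z)
      have hF := mu_F z
      rw [← hx] at hF
      obtain ⟨w, hw⟩ := mu_surjF x (PhiF_F D A hA hDA x hF)
      refine ⟨w, mu_inj ?_⟩
      rw [hc', hw, hx]
  let e : M n ≃ₗ⁅ℤ⁆ M n := LieEquiv.ofBijective φ hbij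
  have he : ∀ i, e.symm (h i) = xM i := by
    intro i
    rw [LieEquiv.symm_apply_eq]
    exact (hφx i).symm
  intro B _ _ hB f
  refine ⟨(liftM (A := B) hB f).comp e.symm.toLieHom, ?_, ?_⟩
  · intro i
    change liftM (A := B) hB f (e.symm (h i)) = f i
    rw [he]; exact liftM_x _ _ _
  · intro ψ hψ
    have h1 : ψ.comp φ = liftM (A := B) hB f := by
      refine hom_ext fun i => ?_
      rw [LieHom.comp_apply, hφx, hψ]
      exact (liftM_x _ _ _).symm
    ext z
    obtain ⟨w, rfl⟩ := hbij.2 z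
    have h2 : e.symm (φ w) = w := e.symm_apply_apply w
    change ψ (φ w) = liftM (A := B) hB f (e.symm (φ w))
    rw [h2, ← h1]; rfl

lemma unif_prim (n k : ℕ) (hk : k ≤ n) (g : Fin k → FreeLieAlgebra ℤ (Fin n))
    (hu : IsUniformlyDistributed n k g) : IsPrimitiveSystem n k hk (fun j => mkM n (g j)) := by
  obtain ⟨m, rfl⟩ := Nat.exists_eq_add_of_le hk
  obtain ⟨K, hK⟩ := surj_glob (fun j => (mu (mkM (k+m) (g j))).2) (fun F _ _ a w => surj_field g hu F a w)
  obtain ⟨D, A, hD, hA, hDA, h1, h2⟩ := CA (fun j => (mu (mkM (k+m) (g j))).2) K hK (fun j => (mu (mkM (k+m) (g j))).1)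
    (fun i => mu_F _)
  have hex : ∀ i, ∃ z : M (k+m), mu z = W.mk (al (k+m)) (A i) (D i) := by
    intro i
    refine mu_surjF _ ?_
    rw [mk_fst, mk_snd]
    exact congrFun hDA i
  choose h hh using hex
  refine ⟨h, freeGen D A hD hA hDA h hh, fun j => mu_inj ?_⟩
  change mu (h (Fin.castAdd m j)) = _
  rw [hh, h1, h2]
  rfl
end
end FML

/-- **main theorem.** A system of elements `g₁,…,g_k` (`1 ≤ k ≤ n`) of the
free metabelian Lie ring `M` on `n` generators is primitive iff it is uniformly
distributed on the variety of metabelian Lie rings. -/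
theorem primitive_iff_uniformly_distributed (n k : ℕ) (hk1 : 1 ≤ k) (hk : k ≤ n)
    (g : Fin k → FreeLieAlgebra ℤ (Fin n)) :
    IsPrimitiveSystem n k hk (fun j => mkM n (g j)) ↔
      IsUniformlyDistributed n k g := by
  exact ⟨FML.prim_unif n k hk g, FML.unif_prim n k hk g⟩
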